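/- arXiv:1308.6650 — 4 statements merged into one kernel-verified Lean document; each statement's English description precedes it below -/
import Mathlib

section
/- Suppose |q a_1⁻¹⋯a_n⁻¹ b_1⁻¹⋯b_n⁻¹| < |t| < 1 and that x_i b_j ∉ qᶻ for all 1 ≤ i, j ≤ n. Then the series defining I(t;x) converges absolutely and I(t;x) = (1−q)ⁿ (q)_∞ⁿ ∏_{i=1}^n ∏_{j=1}^n (q a_i⁻¹ b_j⁻¹)_∞ / [ (t)_∞ · (q t⁻¹ a_1⁻¹⋯a_n⁻¹ b_1⁻¹⋯b_n⁻¹)_∞ ] · θ(t x_1⋯x_n b_1⋯b_n) / ∏_{i=1}^n ∏_{j=1}^n θ(x_i b_j) · ∏_{1≤i<j≤n} x_j θ(x_i/x_j). (Milne–Gustafson summation formula.) -/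
/-!
The two sides are compared as functions of the numbers `c j = (a j)⁻¹`, as in the Ismail proof
of the Ramanujan summation of `₁ψ₁`.

*Case `a = x`.* The factors `(q y / x i)_∞` kill every lattice point with a negative exponent, so
the series is supported on `ν ∈ ℕⁿ`. Let `S N` be the sum of the weights over `|ν| = N`. By
Lagrange interpolation (`lagrange_sum`) both `1 - q ^ (N + 1)` and `1 - (∏ x i b i) q ^ N` are
partial fraction sums over the coordinates of the lattice point, and the two families of terms are
matched by shifting one coordinate (`uniWt_shift`). Hence
`(1 - q ^ (N + 1)) S (N + 1) = (1 - (∏ x i b i) q ^ N) S N` (`uniWt_rec`), and the q-binomial theorem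
(`q_binomial`) sums the series. This needs the points `x i` to be distinct modulo `q ^ ℤ`; otherwise
both sides vanish, the left one because the summand is antisymmetric (`mgTerm_sum_degenerate`).

*Quasi-periodicity.* Replacing `x k` by `q x k` multiplies both sides by `t⁻¹`
(`mgTerm_sum_shift`, `mgRHS_shift`). So if the formula holds when `a k` equals `q ^ (-m) x k` and the
base point has that same `k`-th coordinate, then it holds for this `a k` at the base point `x`.

*Continuation.* Both sides are holomorphic in `c k` on a disc around `0` containing `(a k)⁻¹`, the
left one by a Weierstrass majorant (`mgMaj_summable`, `norm_mgTerm_le`). They agree at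
`c k = q ^ m (x k)⁻¹` for all large `m`, and these points accumulate at `0`, so they agree on the
disc (`mg_continuation_step`). Freeing the parameters one at a time (`mg_eval`) gives the formula for
every `a`.
-/

open scoped BigOperators
open Finset

/-- The infinite q-Pochhammer symbol `(a)_∞ = ∏_{i=0}^∞ (1 - qⁱ a)`. -/
noncomputable def qp (q a : ℂ) : ℂ := ∏' i : ℕ, (1 - q ^ i * a)

/-- The theta function `θ(a) = (a)_∞ (q/a)_∞`. -/
noncomputable def th (q a : ℂ) : ℂ := qp q a * qp q (q / a)

/-- Summand of the normalized Jackson integral of Milne–Gustafson type. -/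
noncomputable def mgTerm {n : ℕ} (q t : ℂ) (a b x : Fin n → ℂ) (ν : Fin n → ℤ) : ℂ :=
  t ^ (∑ i, ν i) *
    (∏ i, ∏ j, qp q (q * (a j)⁻¹ * (x i * q ^ ν i)) / qp q (b j * (x i * q ^ ν i))) *
    ∏ i, ∏ j ∈ Finset.Ioi i, (x j * q ^ ν j - x i * q ^ ν i)

/-- The normalized Jackson integral of Milne–Gustafson type `I(t;x)`. -/
noncomputable def mgSum {n : ℕ} (q t : ℂ) (a b x : Fin n → ℂ) : ℂ :=
  (1 - q) ^ n * ∑' ν : Fin n → ℤ, mgTerm q t a b x ν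

/-! ### The q-Pochhammer symbol -/

section QPochhammer

variable {q : ℂ}

lemma summable_qpow_mul (hq : ‖q‖ < 1) (z : ℂ) : Summable fun i : ℕ => ‖-(q ^ i * z)‖ := by
  simp only [norm_neg, norm_mul, norm_pow]
  exact (summable_geometric_of_lt_one (norm_nonneg _) hq).mul_right _

lemma qp_multipliable (hq : ‖q‖ < 1) (z : ℂ) : Multipliable fun i : ℕ => (1 - q ^ i * z) := by
  simpa only [sub_eq_add_neg] using multipliable_one_add_of_summable (summable_qpow_mul hq z)

lemma qp_zero : qp q 0 = 1 := by simp [qp]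

lemma qp_step (hq : ‖q‖ < 1) (z : ℂ) : qp q z = (1 - z) * qp q (q * z) := by
  have h := (qp_multipliable hq (q * z))
  have h2 := tprod_eq_zero_mul' (f := fun i : ℕ => (1 - q ^ i * z))
    (by simpa only [pow_succ, mul_assoc] using h)
  simp only [qp]
  rw [h2]
  simp only [pow_succ, mul_assoc, pow_zero, one_mul]

lemma qp_ne_zero (hq : ‖q‖ < 1) {z : ℂ} (hz : ∀ i : ℕ, q ^ i * z ≠ 1) : qp q z ≠ 0 := by
  have := tprod_one_add_ne_zero_of_summable (f := fun i : ℕ => -(q ^ i * z))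
    (fun i h => hz i (by linear_combination -h)) (summable_qpow_mul hq z)
  simpa only [qp, sub_eq_add_neg] using this

lemma qp_ne_zero_of_norm_lt (hq : ‖q‖ < 1) {z : ℂ} (hz : ‖z‖ < 1) : qp q z ≠ 0 := by
  refine qp_ne_zero hq fun i h => ?_
  have h1 : ‖q ^ i * z‖ = 1 := by rw [h]; simp
  rw [norm_mul, norm_pow] at h1
  have : ‖q‖ ^ i ≤ 1 := pow_le_one₀ (norm_nonneg _) hq.le
  nlinarith [norm_nonneg z]

lemma qp_eq_zero {z : ℂ} {i : ℕ} (hz : q ^ i * z = 1) : qp q z = 0 :=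
  tprod_of_exists_eq_zero ⟨i, by rw [hz, sub_self]⟩

lemma qp_differentiable (hq : ‖q‖ < 1) : Differentiable ℂ (qp q) := by
  intro z
  have hs : Summable fun i : ℕ => ‖q‖ ^ i * (‖z‖ + 1) :=
    (summable_geometric_of_lt_one (norm_nonneg _) hq).mul_right _
  have hU : IsOpen (Metric.ball (0 : ℂ) (‖z‖ + 1)) := Metric.isOpen_ball
  have hp := Summable.hasProdLocallyUniformlyOn_nat_one_add
    (f := fun (i : ℕ) (w : ℂ) => -(q ^ i * w)) hU hs
    (Filter.Eventually.of_forall fun i w hw => by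
      rw [norm_neg, norm_mul, norm_pow]
      have : ‖w‖ < ‖z‖ + 1 := by simpa using hw
      gcongr) (fun i => by fun_prop)
  have hd := hp.differentiableOn (Filter.Eventually.of_forall fun s => by fun_prop) hU
  have hd' : DifferentiableOn ℂ (qp q) (Metric.ball (0 : ℂ) (‖z‖ + 1)) := by
    refine hd.congr fun w _ => ?_
    simp only [qp, sub_eq_add_neg]
  exact hd'.differentiableAt (hU.mem_nhds (by simp))

/-- Real majorant `∏ (1 + |q|ⁱ r)` of the q-Pochhammer symbol on the disc of radius `r`. -/
noncomputable def qpMaj (q : ℂ) (r : ℝ) : ℝ := ∏' i : ℕ, (1 + ‖q‖ ^ i * r)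

lemma qpMaj_multipliable (hq : ‖q‖ < 1) (r : ℝ) :
    Multipliable fun i : ℕ => (1 + ‖q‖ ^ i * r) :=
  Real.multipliable_one_add_of_summable
    ((summable_geometric_of_lt_one (norm_nonneg _) hq).mul_right _)

lemma qpMaj_step (hq : ‖q‖ < 1) (r : ℝ) : qpMaj q r = (1 + r) * qpMaj q (‖q‖ * r) := by
  have h := (qpMaj_multipliable hq (‖q‖ * r))
  have h2 := tprod_eq_zero_mul' (f := fun i : ℕ => (1 + ‖q‖ ^ i * r))
    (by simpa only [pow_succ, mul_assoc] using h)
  simp only [qpMaj]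
  rw [h2]
  simp only [pow_succ, mul_assoc, pow_zero, one_mul]

lemma qpMaj_pos (hq : ‖q‖ < 1) {r : ℝ} (hr : 0 ≤ r) : 0 < qpMaj q r := by
  have hpos : ∀ i : ℕ, 0 < 1 + ‖q‖ ^ i * r := fun i => by positivity
  unfold qpMaj
  rw [← Real.rexp_tsum_eq_tprod hpos]
  · exact Real.exp_pos _
  · exact Real.summable_log_one_add_of_summable
      ((summable_geometric_of_lt_one (norm_nonneg _) hq).mul_right _)

lemma norm_qp_le (hq : ‖q‖ < 1) {z : ℂ} {r : ℝ} (hz : ‖z‖ ≤ r) : ‖qp q z‖ ≤ qpMaj q r := by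
  unfold qp qpMaj
  rw [(qp_multipliable hq z).norm_tprod]
  have h1 := (qp_multipliable hq z).norm.hasProd.tendsto_prod_nat
  have h2 := (qpMaj_multipliable hq r).hasProd.tendsto_prod_nat
  refine le_of_tendsto_of_tendsto' h1 h2 fun n => ?_
  refine Finset.prod_le_prod (fun i _ => norm_nonneg _) fun i _ => ?_
  refine (norm_sub_le _ _).trans ?_
  rw [norm_one, norm_mul, norm_pow]
  gcongr

/-! ### The theta function -/

/-- Quasi-periodicity of the theta function. -/
lemma th_mul_q (hq0 : q ≠ 0) (hq : ‖q‖ < 1) {z : ℂ} (hz : z ≠ 0) :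
    th q (q * z) = -z⁻¹ * th q z := by
  unfold th
  rw [qp_step hq z, show q / (q * z) = z⁻¹ by field_simp, qp_step hq z⁻¹,
    show q * z⁻¹ = q / z by rfl]
  field_simp
  ring

lemma th_zpow (hq0 : q ≠ 0) (m : ℤ) : th q (q ^ m) = 0 := by
  unfold th
  rcases le_or_gt m 0 with h | h
  · rw [qp_eq_zero (i := m.natAbs), zero_mul]
    rw [← zpow_natCast, ← zpow_add₀ hq0, show ((m.natAbs : ℤ) + m) = 0 by omega, zpow_zero]
  · rw [qp_eq_zero (z := q / q ^ m) (i := (m - 1).natAbs), mul_zero]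
    rw [← zpow_natCast, div_eq_mul_inv, ← zpow_neg, ← zpow_one_add₀ hq0, ← zpow_add₀ hq0,
      show (((m - 1).natAbs : ℤ) + (1 + -m)) = 0 by omega, zpow_zero]

lemma th_ne_zero (hq0 : q ≠ 0) (hq : ‖q‖ < 1) {z : ℂ} (hz0 : z ≠ 0) (hz : ∀ m : ℤ, z ≠ q ^ m) :
    th q z ≠ 0 := by
  unfold th
  refine mul_ne_zero (qp_ne_zero hq fun i h => hz (-i) ?_) (qp_ne_zero hq fun i h => hz (i + 1) ?_)
  · rw [zpow_neg, zpow_natCast]; exact eq_inv_of_mul_eq_one_right h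
  · rw [zpow_add_one₀ hq0, zpow_natCast]; field_simp at h; exact h.symm

end QPochhammer

/-! ### Absolute convergence -/

section Summability

open Filter Topology

lemma summable_pi_prod : ∀ {n : ℕ} (g : Fin n → ℤ → ℝ), (∀ i m, 0 ≤ g i m) →
    (∀ i, Summable (g i)) → Summable fun ν : Fin n → ℤ => ∏ i, g i (ν i) := by
  intro n
  induction n with
  | zero => intro g _ _; exact (hasSum_fintype _).summable
  | succ n ih =>
    intro g h0 hs
    have h1 := ih (fun i => g i.succ) (fun i m => h0 _ m) (fun i => hs _)
    have h2 := (hs 0).mul_of_nonneg h1 (fun m => h0 0 m)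
      (fun ν => Finset.prod_nonneg fun i _ => h0 _ _)
    rw [← (Fin.consEquiv fun _ => ℤ).summable_iff]
    refine h2.congr fun p => ?_
    simp [Fin.prod_univ_succ, Fin.consEquiv]

/-- Ratio test at both ends of a bilateral series; `ρ` is the quotient of consecutive terms. -/
lemma summable_int_of_ratio {g ρ : ℤ → ℝ} (hg : ∀ m, 0 < g m)
    (hstep : ∀ m, g (m + 1) = ρ m * g m) {l₁ l₂ : ℝ} (hl₁ : l₁ < 1) (hl₂ : l₂ < 1)
    (h₁ : Tendsto (fun k : ℕ => ρ k) atTop (𝓝 l₁))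
    (h₂ : Tendsto (fun k : ℕ => (ρ (-(k : ℤ)))⁻¹) atTop (𝓝 l₂)) : Summable g := by
  refine Summable.of_nat_of_neg ?_ ?_
  · refine summable_of_ratio_test_tendsto_lt_one hl₁ (Eventually.of_forall fun k => (hg _).ne') ?_
    refine h₁.congr fun k => ?_
    rw [Real.norm_of_nonneg (hg _).le, Real.norm_of_nonneg (hg _).le]
    push_cast
    rw [hstep, mul_div_cancel_right₀ _ (hg _).ne']
  · refine summable_of_ratio_test_tendsto_lt_one hl₂ (Eventually.of_forall fun k => (hg _).ne') ?_
    refine ((tendsto_add_atTop_iff_nat 1).2 h₂).congr fun k => ?_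
    rw [Real.norm_of_nonneg (hg _).le, Real.norm_of_nonneg (hg _).le]
    have := hstep (-((k + 1 : ℕ) : ℤ))
    rw [show -((k + 1 : ℕ) : ℤ) + 1 = -(k : ℤ) by push_cast; ring] at this
    rw [this, div_mul_cancel_right₀ (hg _).ne']

/-- One-variable majorant of the `i`-th factor of the summand times the `k`-th power of the
lattice point, valid for all parameters `a` with `‖(a j)⁻¹‖ ≤ M j`. -/
noncomputable def colMaj {n : ℕ} (q t : ℂ) (M : Fin n → ℝ) (b : Fin n → ℂ) (x : ℂ) (k : ℕ)
    (m : ℤ) : ℝ :=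
  ‖t‖ ^ m * (∏ j, qpMaj q (‖q‖ * M j * ‖x‖ * ‖q‖ ^ m) / ‖qp q (b j * (x * q ^ m))‖) *
    (‖x‖ * ‖q‖ ^ m) ^ k

variable {n : ℕ} {q t : ℂ} {b : Fin n → ℂ}

lemma qp_lattice_ne_zero (hq0 : q ≠ 0) (hq : ‖q‖ < 1) {x b : ℂ} (h : ∀ m : ℤ, x * b ≠ q ^ m)
    (m : ℤ) : qp q (b * (x * q ^ m)) ≠ 0 := by
  refine qp_ne_zero hq fun i hi => h (-(i + m)) ?_
  rw [zpow_neg, zpow_add₀ hq0, zpow_natCast]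
  have h2 : q ^ m ≠ 0 := zpow_ne_zero _ hq0
  have h3 : q ^ i ≠ 0 := pow_ne_zero _ hq0
  field_simp
  linear_combination hi

/-- The quotient of consecutive terms tends to `‖t‖ ‖q‖ ^ k` at `+∞`, and its inverse to
`‖t‖⁻¹ ‖q‖ ^ (n - k) ∏ M j / ‖b j‖` at `-∞`; as `k < n`, both limits are below one. -/
lemma colMaj_summable (hq0 : q ≠ 0) (hq : ‖q‖ < 1) (ht0 : t ≠ 0) (ht : ‖t‖ < 1)
    {M : Fin n → ℝ} (hM : ∀ j, 0 < M j) (hb : ∀ j, b j ≠ 0)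
    (hlow : ‖q‖ * ∏ j, M j < ‖t‖ * ∏ j, ‖b j‖) {x : ℂ} (hx : x ≠ 0)
    (hxb : ∀ j, ∀ m : ℤ, x * b j ≠ q ^ m) {k : ℕ} (hk : k < n) :
    Summable (colMaj q t M b x k) := by
  have hQ : 0 < ‖q‖ := norm_pos_iff.2 hq0
  have hT : 0 < ‖t‖ := norm_pos_iff.2 ht0
  have hX : 0 < ‖x‖ := norm_pos_iff.2 hx
  have hne : ∀ j (m : ℤ), (1 - b j * (x * q ^ m)) ≠ 0 := fun j m h => by
    have := qp_lattice_ne_zero hq0 hq (hxb j) m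
    rw [qp_step hq, h, zero_mul] at this
    exact this rfl
  set r : Fin n → ℝ := fun j => ‖q‖ * M j * ‖x‖ with hr
  have hrpos : ∀ j, 0 < r j := fun j => by have := hM j; positivity
  set ρ : ℤ → ℝ := fun m =>
    ‖t‖ * (∏ j, ‖1 - b j * (x * q ^ m)‖ / (1 + r j * ‖q‖ ^ m)) * ‖q‖ ^ k with hρdef
  refine summable_int_of_ratio (ρ := ρ) (l₁ := ‖t‖ * (∏ j : Fin n, (1:ℝ)) * ‖q‖ ^ k)
    (l₂ := ‖t‖⁻¹ * (∏ j, r j / ‖b j * x‖) * (‖q‖ ^ k)⁻¹) ?_ ?_ ?_ ?_ ?_ ?_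
  · intro m
    unfold colMaj
    have : 0 < ∏ j, qpMaj q (r j * ‖q‖ ^ m) / ‖qp q (b j * (x * q ^ m))‖ :=
      Finset.prod_pos fun j _ => by
        have h1 := norm_pos_iff.2 (qp_lattice_ne_zero hq0 hq (hxb j) m)
        have h2 := hrpos j
        have h3 : 0 < qpMaj q (r j * ‖q‖ ^ m) := qpMaj_pos hq (by positivity)
        positivity
    positivity
  · intro m
    simp only [colMaj, hρdef]
    have hprod : ∏ j, qpMaj q (‖q‖ * M j * ‖x‖ * ‖q‖ ^ (m + 1)) / ‖qp q (b j * (x * q ^ (m + 1)))‖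
        = (∏ j, ‖1 - b j * (x * q ^ m)‖ / (1 + r j * ‖q‖ ^ m)) *
          ∏ j, qpMaj q (‖q‖ * M j * ‖x‖ * ‖q‖ ^ m) / ‖qp q (b j * (x * q ^ m))‖ := by
      rw [← Finset.prod_mul_distrib]
      refine Finset.prod_congr rfl fun j _ => ?_
      have h1 := norm_pos_iff.2 (hne j m)
      have h4 := norm_pos_iff.2 (qp_lattice_ne_zero hq0 hq (hxb j) (m + 1))
      have h2 := hrpos j
      have h3 : 0 < 1 + r j * ‖q‖ ^ m := by positivity
      rw [qpMaj_step hq (‖q‖ * M j * ‖x‖ * ‖q‖ ^ m), qp_step hq (b j * (x * q ^ m)), norm_mul,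
        show ‖q‖ * (‖q‖ * M j * ‖x‖ * ‖q‖ ^ m) = ‖q‖ * M j * ‖x‖ * ‖q‖ ^ (m + 1) by
          rw [zpow_add_one₀ hQ.ne']; ring,
        show q * (b j * (x * q ^ m)) = b j * (x * q ^ (m + 1)) by
          rw [zpow_add_one₀ hq0]; ring]
      simp only [hr] at h3 ⊢
      generalize ‖1 - b j * (x * q ^ m)‖ = A at h1 ⊢
      generalize ‖qp q (b j * (x * q ^ (m + 1)))‖ = A' at h4 ⊢
      field_simp
    rw [hprod, zpow_add_one₀ hT.ne', zpow_add_one₀ hQ.ne']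
    ring
  · simp only [Finset.prod_const_one, mul_one]
    exact mul_lt_one_of_nonneg_of_lt_one_left hT.le ht (pow_le_one₀ hQ.le hq.le)
  · have hB : 0 < ∏ j, ‖b j‖ := Finset.prod_pos fun j _ => norm_pos_iff.2 (hb j)
    have hMp : 0 < ∏ j, M j := Finset.prod_pos fun j _ => hM j
    have e1 : ∏ j, r j / ‖b j * x‖ = ‖q‖ ^ n * (∏ j, M j) / ∏ j, ‖b j‖ := by
      rw [← Fin.prod_const, ← Finset.prod_mul_distrib, ← Finset.prod_div_distrib]
      refine Finset.prod_congr rfl fun j _ => ?_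
      rw [norm_mul]; simp only [hr]; field_simp
    rw [e1, ← div_eq_mul_inv, div_lt_one (by positivity), inv_mul_lt_iff₀ hT,
      div_lt_iff₀ hB]
    obtain ⟨d, rfl⟩ : ∃ d, n = k + (d + 1) := ⟨n - k - 1, by omega⟩
    have hd : ‖q‖ ^ d ≤ 1 := pow_le_one₀ hQ.le hq.le
    calc ‖q‖ ^ (k + (d + 1)) * ∏ j, M j = ‖q‖ ^ k * (‖q‖ ^ d * (‖q‖ * ∏ j, M j)) := by ring
      _ ≤ ‖q‖ ^ k * (1 * (‖q‖ * ∏ j, M j)) := by gcongr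
      _ < ‖q‖ ^ k * (‖t‖ * ∏ j, ‖b j‖) := by rw [one_mul]; gcongr
      _ = _ := by ring
  · refine (tendsto_const_nhds.mul (tendsto_finsetProd _ fun j _ => ?_)).mul tendsto_const_nhds
    simp only [zpow_natCast]
    have h1 : Tendsto (fun k : ℕ => q ^ k) atTop (𝓝 0) := tendsto_pow_atTop_nhds_zero_of_norm_lt_one hq
    have h2 : Tendsto (fun k : ℕ => ‖q‖ ^ k) atTop (𝓝 0) := tendsto_pow_atTop_nhds_zero_of_lt_one hQ.le hq
    have h3 := ((h1.const_mul x).const_mul (b j)).const_sub 1 |>.norm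
    have h4 := (h2.const_mul (r j)).const_add 1
    have h5 : Tendsto (fun k : ℕ => ‖1 - b j * (x * q ^ k)‖ / (1 + r j * ‖q‖ ^ k)) atTop
        (𝓝 (‖1 - b j * (x * 0)‖ / (1 + r j * 0))) := h3.div h4 (by simp)
    simpa using h5
  · have : ∀ k' : ℕ, (ρ (-(k' : ℤ)))⁻¹ = ‖t‖⁻¹ *
        (∏ j, (‖q‖ ^ k' + r j) / ‖q ^ k' - b j * x‖) * (‖q‖ ^ k)⁻¹ := fun k' => by
      simp only [hρdef, mul_inv, ← Finset.prod_inv_distrib]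
      congr 2
      refine Finset.prod_congr rfl fun j _ => ?_
      rw [zpow_neg, zpow_neg, zpow_natCast, zpow_natCast, inv_div]
      have e1 : q ^ k' - b j * x = q ^ k' * (1 - b j * (x * (q ^ k')⁻¹)) := by field_simp
      rw [e1, norm_mul, norm_pow]
      field_simp
    simp only [this]
    refine (tendsto_const_nhds.mul (tendsto_finsetProd _ fun j _ => ?_)).mul tendsto_const_nhds
    have h1 : Tendsto (fun k : ℕ => q ^ k) atTop (𝓝 0) := tendsto_pow_atTop_nhds_zero_of_norm_lt_one hq
    have h2 : Tendsto (fun k : ℕ => ‖q‖ ^ k) atTop (𝓝 0) := tendsto_pow_atTop_nhds_zero_of_lt_one hQ.le hq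
    have h3 := (h1.sub_const (b j * x)).norm
    have h4 := h2.add_const (r j)
    simp only [zero_sub, norm_neg, zero_add] at h3 h4
    exact h4.div h3 (norm_ne_zero_iff.2 (mul_ne_zero (hb j) hx))

/-- Summable majorant of the whole summand, obtained from the Leibniz expansion of the
Vandermonde determinant. -/
noncomputable def mgMaj {n : ℕ} (q t : ℂ) (M : Fin n → ℝ) (b x : Fin n → ℂ) (ν : Fin n → ℤ) : ℝ :=
  ∑ σ : Equiv.Perm (Fin n), ∏ i, colMaj q t M b (x i) (σ i : ℕ) (ν i)

lemma mgMaj_summable (hq0 : q ≠ 0) (hq : ‖q‖ < 1) (ht0 : t ≠ 0) (ht : ‖t‖ < 1)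
    {M : Fin n → ℝ} (hM : ∀ j, 0 < M j) (hb : ∀ j, b j ≠ 0)
    (hlow : ‖q‖ * ∏ j, M j < ‖t‖ * ∏ j, ‖b j‖) {x : Fin n → ℂ} (hx : ∀ i, x i ≠ 0)
    (hxb : ∀ i j, ∀ m : ℤ, x i * b j ≠ q ^ m) :
    Summable (mgMaj q t M b x) := by
  refine summable_sum fun σ _ => summable_pi_prod _ (fun i m => ?_) fun i =>
    colMaj_summable hq0 hq ht0 ht hM hb hlow (hx i) (hxb i) (σ i).2
  unfold colMaj
  have : 0 ≤ ∏ j, qpMaj q (‖q‖ * M j * ‖x i‖ * ‖q‖ ^ m) / ‖qp q (b j * (x i * q ^ m))‖ :=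
    Finset.prod_nonneg fun j _ => div_nonneg
      (qpMaj_pos hq (by have := hM j; positivity)).le (norm_nonneg _)
  positivity

/-- The bound is uniform over all `a` with `‖(a j)⁻¹‖ ≤ M j`, as needed for holomorphy of the series
in the parameters `(a j)⁻¹`. -/
lemma norm_mgTerm_le (hq : ‖q‖ < 1) {a x : Fin n → ℂ} {M : Fin n → ℝ}
    (hM : ∀ j, ‖(a j)⁻¹‖ ≤ M j) (ht0 : t ≠ 0) (ν : Fin n → ℤ) :
    ‖mgTerm q t a b x ν‖ ≤ mgMaj q t M b x ν := by
  unfold mgTerm mgMaj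
  rw [← Matrix.det_vandermonde (fun i => x i * q ^ ν i), ← Matrix.det_transpose,
    Matrix.det_apply', Finset.mul_sum]
  refine (norm_sum_le _ _).trans (Finset.sum_le_sum fun σ _ => ?_)
  have e1 : ‖t ^ ∑ i, ν i‖ = ∏ i, ‖t‖ ^ ν i := by
    rw [norm_zpow]
    have hT := norm_ne_zero_iff.2 ht0
    induction (univ : Finset (Fin n)) using Finset.cons_induction with
    | empty => simp
    | cons i s hi ih => rw [Finset.sum_cons, Finset.prod_cons, zpow_add₀ hT, ih]
  have e2 : ‖((Equiv.Perm.sign σ : ℤ) : ℂ)‖ = 1 := by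
    rcases Int.units_eq_one_or (Equiv.Perm.sign σ) with h | h <;> simp [h]
  rw [norm_mul, norm_mul, norm_mul, e1, e2, one_mul, norm_prod, norm_prod,
    ← Finset.prod_mul_distrib, ← Finset.prod_mul_distrib]
  refine Finset.prod_le_prod (fun i _ => by positivity) fun i _ => ?_
  unfold colMaj
  simp only [Matrix.transpose_apply, Matrix.vandermonde_apply, norm_pow, norm_mul, norm_zpow]
  gcongr
  rw [norm_prod]
  refine Finset.prod_le_prod (fun i _ => norm_nonneg _) fun j _ => ?_
  rw [norm_div]
  gcongr
  refine norm_qp_le hq ?_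
  rw [norm_mul, norm_mul, norm_mul, norm_zpow, ← mul_assoc]
  gcongr
  exact hM j

end Summability

/-! ### Finite identities and the q-binomial theorem -/

section Finite

open Polynomial in
/-- Lagrange interpolation at the nodes `y i`, evaluated at `0`, of the polynomial
`∏ (1 - b j z) - ∏ (-b j) ∏ (z - y j)` of degree less than `n`. -/
lemma lagrange_sum {n : ℕ} {b y : Fin n → ℂ} (hb : ∀ j, b j ≠ 0) (hy : Function.Injective y)
    (hy0 : ∀ i, y i ≠ 0) :
    ∑ i, (∏ j, (1 - b j * y i)) / ∏ j ∈ univ.erase i, (1 - y i / y j)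
      = 1 - (∏ j, b j) * ∏ j, y j := by
  set f : ℂ[X] := C (∏ j, -b j) * (Lagrange.nodal univ (fun j => (b j)⁻¹) - Lagrange.nodal univ y)
    with hf
  have hdeg : f.degree < (univ : Finset (Fin n)).card := by
    rw [hf, degree_C_mul (Finset.prod_ne_zero_iff.2 fun j _ => neg_ne_zero.2 (hb j))]
    refine (degree_sub_lt_left ?_ Lagrange.nodal_ne_zero ?_).trans_eq Lagrange.degree_nodal
    · rw [Lagrange.degree_nodal, Lagrange.degree_nodal]
    · rw [Lagrange.nodal_monic.leadingCoeff, Lagrange.nodal_monic.leadingCoeff]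
  have hP : ∀ z, f.eval z = ∏ j, (1 - b j * z) - (∏ j, -b j) * ∏ j, (z - y j) := by
    intro z
    rw [hf, eval_mul, eval_C, eval_sub, Lagrange.eval_nodal, Lagrange.eval_nodal, mul_sub,
      ← Finset.prod_mul_distrib]
    congr 1
    refine Finset.prod_congr rfl fun j _ => ?_
    have := hb j
    field_simp
    ring
  have h := congrArg (Polynomial.eval 0) (Lagrange.eq_interpolate (v := y) hy.injOn hdeg)
  rw [hP, Lagrange.interpolate_apply, eval_finsetSum] at h
  have e : (∏ j, -b j) * ∏ j, (0 - y j) = (∏ j, b j) * ∏ j, y j := by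
    rw [← Finset.prod_mul_distrib, ← Finset.prod_mul_distrib]
    exact Finset.prod_congr rfl fun j _ => by ring
  rw [e] at h
  simp only [mul_zero, sub_zero, Finset.prod_const_one] at h
  rw [h]
  refine Finset.sum_congr rfl fun i _ => ?_
  rw [eval_mul, eval_C, hP, Finset.prod_eq_zero (i := i) (f := fun j => y i - y j) (mem_univ i)
    (sub_self _), mul_zero, sub_zero, div_eq_mul_inv]
  congr 1
  rw [Lagrange.basis, eval_prod, ← Finset.prod_inv_distrib]
  refine Finset.prod_congr rfl fun j hj => ?_
  have hne : y i - y j ≠ 0 := sub_ne_zero.2 fun h => (Finset.ne_of_mem_erase hj) (hy h).symm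
  have h0 := hy0 j
  have hne' : 1 - y i / y j ≠ 0 := by
    rw [one_sub_div h0]
    exact div_ne_zero (by rw [← neg_sub]; exact neg_ne_zero.2 hne) h0
  simp only [Lagrange.basisDivisor, eval_mul, eval_C, eval_sub, eval_X]
  rw [inv_eq_iff_eq_inv]
  field_simp
  ring

/-- Separates, in a product over pairs, the factors of the pairs containing `k`. -/
lemma pairProd_split {n : ℕ} (k : Fin n) (F : Fin n → Fin n → ℂ) :
    ∏ i, ∏ j ∈ Ioi i, F i j =
      (∏ i, ∏ j ∈ Ioi i, if i = k ∨ j = k then 1 else F i j) *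
        ∏ j ∈ univ.erase k, if k < j then F k j else F j k := by
  have h1 : ∏ i, ∏ j ∈ Ioi i, (if i = k then F i j else 1) = ∏ j, if k < j then F k j else 1 := by
    rw [Finset.prod_eq_single k]
    · simp only [if_true, Finset.prod_ite, Finset.prod_const_one, mul_one]
      congr 1; ext; simp
    · intro i _ hi; simp [hi]
    · simp
  have h2 : ∏ i, ∏ j ∈ Ioi i, (if j = k then F i j else 1) = ∏ j, if j < k then F j k else 1 := by
    refine Finset.prod_congr rfl fun i _ => ?_
    rw [Finset.prod_ite_eq']
    simp
  have h3 : ∏ j ∈ univ.erase k, (if k < j then F k j else F j k) =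
      (∏ j, if k < j then F k j else 1) * ∏ j, if j < k then F j k else 1 := by
    rw [← Finset.prod_mul_distrib]
    refine Eq.trans ?_ (Finset.prod_erase univ (a := k) (by simp))
    refine Finset.prod_congr rfl fun j hj => ?_
    rcases lt_or_gt_of_ne (Finset.ne_of_mem_erase hj) with h | h
    · simp [h, h.not_gt]
    · simp [h, h.not_gt]
  rw [h3, ← h1, ← h2]
  simp only [← Finset.prod_mul_distrib]
  refine Finset.prod_congr rfl fun i _ => Finset.prod_congr rfl fun j hj => ?_
  have : i < j := by simpa using hj
  by_cases hi : i = k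
  · have : j ≠ k := by rintro rfl; exact this.ne hi
    simp [hi, this]
  · by_cases hj : j = k <;> simp [hi, hj]

/-- Effect on a product over pairs of modifying only the factors of pairs containing `k`. -/
lemma pairProd_ratio {n : ℕ} (k : Fin n) {F F' : Fin n → Fin n → ℂ} {g h : Fin n → ℂ}
    (h0 : ∀ i j, i ≠ k → j ≠ k → F' i j = F i j)
    (h1 : ∀ j, j ≠ k → F' k j * h j = F k j * g j)
    (h2 : ∀ j, j ≠ k → F' j k * h j = F j k * g j) :
    (∏ i, ∏ j ∈ Ioi i, F' i j) * ∏ j ∈ univ.erase k, h j =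
      (∏ i, ∏ j ∈ Ioi i, F i j) * ∏ j ∈ univ.erase k, g j := by
  rw [pairProd_split k F, pairProd_split k F', mul_assoc, mul_assoc, ← Finset.prod_mul_distrib,
    ← Finset.prod_mul_distrib]
  congr 1
  · refine Finset.prod_congr rfl fun i _ => Finset.prod_congr rfl fun j _ => ?_
    split_ifs with hij
    · rfl
    · push Not at hij
      exact h0 i j hij.1 hij.2
  · refine Finset.prod_congr rfl fun j hj => ?_
    have := Finset.ne_of_mem_erase hj
    split_ifs
    · exact h1 j this
    · exact h2 j this

lemma prod_prod_eq_diag_mul {n : ℕ} (F : Fin n → Fin n → ℂ) :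
    ∏ i, ∏ j, F i j = (∏ i, F i i) * ∏ i, ∏ j ∈ Ioi i, F i j * F j i := by
  simp only [Finset.prod_mul_distrib]
  have h : ∏ i, ∏ j ∈ Ioi i, F j i = ∏ i, ∏ j ∈ Iio i, F i j :=
    Finset.prod_comm' (by simp)
  rw [h, ← Finset.prod_mul_distrib, ← Finset.prod_mul_distrib]
  refine Finset.prod_congr rfl fun i _ => ?_
  rw [← Finset.mul_prod_erase univ _ (mem_univ i)]
  congr 1
  rw [← Finset.prod_union]
  · refine Finset.prod_congr ?_ fun _ _ => rfl
    ext j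
    simp only [mem_erase, mem_univ, and_true, mem_union, mem_Ioi, mem_Iio]
    exact ⟨fun h => (lt_or_gt_of_ne h).symm, fun h => h.elim (fun h => h.ne') fun h => h.ne⟩
  · rw [Finset.disjoint_left]
    intro j h1 h2
    simp only [mem_Ioi, mem_Iio] at h1 h2
    exact h1.not_gt h2

open Filter Topology in
/-- The q-binomial theorem, for a sequence given by its two-term recurrence. -/
lemma q_binomial {q t c : ℂ} (hq : ‖q‖ < 1) (ht : ‖t‖ < 1) {s : ℕ → ℂ}
    (hs : ∀ N, (1 - q ^ (N + 1)) * s (N + 1) = (1 - c * q ^ N) * s N)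
    (hsum : Summable fun N => t ^ N * s N) :
    ∑' N, t ^ N * s N = s 0 * qp q (c * t) / qp q t := by
  set F : ℂ → ℂ := fun z => ∑' N, z ^ N * s N with hF
  have hsumz : ∀ z, ‖z‖ ≤ ‖t‖ → Summable fun N => z ^ N * s N := fun z hz => by
    refine hsum.norm.of_norm_bounded fun N => ?_
    rw [norm_mul, norm_mul, norm_pow, norm_pow]
    gcongr
  have hstep : ∀ z, ‖z‖ ≤ ‖t‖ → (1 - z) * F z = (1 - c * z) * F (q * z) := fun z hz => by
    have hqz : ‖q * z‖ ≤ ‖t‖ := by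
      rw [norm_mul]; nlinarith [norm_nonneg z, norm_nonneg q]
    have h1 := hsumz z hz
    have h2 := hsumz _ hqz
    have h3 : F z - F (q * z) = z * (F z - c * F (q * z)) := by
      simp only [hF]
      rw [← tsum_mul_left, ← h1.tsum_sub h2, ← h1.tsum_sub (h2.mul_left c), ← tsum_mul_left,
        (h1.sub h2).tsum_eq_zero_add]
      simp only [pow_zero, sub_self, zero_add]
      refine tsum_congr fun N => ?_
      have := hs N
      rw [mul_pow, mul_pow, pow_succ z]
      linear_combination z ^ N * z * this
    linear_combination h3
  have hnorm : ∀ k : ℕ, ‖q ^ k * t‖ ≤ ‖t‖ := fun k => by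
    rw [norm_mul, norm_pow]
    exact mul_le_of_le_one_left (norm_nonneg _) (pow_le_one₀ (norm_nonneg _) hq.le)
  -- iterating the functional equation moves the argument to `0`
  have hiter : ∀ k : ℕ, (∏ i ∈ range k, (1 - q ^ i * t)) * F t =
      (∏ i ∈ range k, (1 - q ^ i * (c * t))) * F (q ^ k * t) := fun k => by
    induction k with
    | zero => simp
    | succ k ih =>
      rw [Finset.prod_range_succ, Finset.prod_range_succ]
      have h := hstep _ (hnorm k)
      rw [show q * (q ^ k * t) = q ^ (k + 1) * t by ring] at h
      linear_combination (1 - q ^ k * t) * ih + (∏ i ∈ range k, (1 - q ^ i * (c * t))) * h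
  have hFlim : Tendsto (fun k : ℕ => F (q ^ k * t)) atTop (𝓝 (∑' N, (0 : ℂ) ^ N * s N)) := by
    refine tendsto_tsum_of_dominated_convergence hsum.norm (fun N => ?_)
      (Eventually.of_forall fun k N => ?_)
    · have h1 : Tendsto (fun k : ℕ => q ^ k * t) atTop (𝓝 (0 * t)) :=
        (tendsto_pow_atTop_nhds_zero_of_norm_lt_one hq).mul_const t
      rw [zero_mul] at h1
      exact (h1.pow N).mul_const _
    · rw [norm_mul, norm_mul, norm_pow, norm_pow]
      gcongr
      exact hnorm k
  have h0 : ∑' N, (0 : ℂ) ^ N * s N = s 0 := by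
    rw [tsum_eq_single 0 fun N hN => by simp [hN]]
    simp
  rw [h0] at hFlim
  have hL := ((qp_multipliable hq t).hasProd.tendsto_prod_nat).mul_const (F t)
  have hR := ((qp_multipliable hq (c * t)).hasProd.tendsto_prod_nat).mul hFlim
  have := tendsto_nhds_unique (hL.congr hiter) hR
  rw [eq_div_iff (qp_ne_zero_of_norm_lt hq ht)]
  simp only [qp]
  linear_combination this

end Finite

/-! ### The recurrence for the unilateral weights -/

section Unilateral

variable {n : ℕ} {q : ℂ}

/-- The summand at the lattice point `y`, without the power of `t`, in the case `a = x`. -/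
noncomputable def uniWt (q : ℂ) (x b y : Fin n → ℂ) : ℂ :=
  (∏ i, ∏ j, qp q (q * (x j)⁻¹ * y i) / qp q (b j * y i)) * ∏ i, ∏ j ∈ Ioi i, (y j - y i)

/-- Moving the `i`-th coordinate from `y i` to `q * y i` turns the `i`-th partial fraction term with
parameters `(x j)⁻¹` into the one with parameters `b j`. -/
lemma uniWt_shift (hq : ‖q‖ < 1) {x b y : Fin n → ℂ} (i : Fin n)
    (hy0 : ∀ j, y j ≠ 0) (hyi : ∀ j, j ≠ i → y j ≠ y i) (hyq : ∀ j, j ≠ i → y j ≠ q * y i)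
    (hqp : ∀ j, qp q (b j * y i) ≠ 0) :
    uniWt q x b (Function.update y i (q * y i)) *
        ((∏ j, (1 - (x j)⁻¹ * (q * y i))) / ∏ j ∈ univ.erase i, (1 - q * y i / y j)) =
      uniWt q x b y * ((∏ j, (1 - b j * y i)) / ∏ j ∈ univ.erase i, (1 - y i / y j)) := by
  set Φ : ℂ → ℂ := fun z => ∏ j, qp q (q * (x j)⁻¹ * z) / qp q (b j * z) with hΦ
  have hΦstep : Φ (q * y i) * (∏ j, (1 - (x j)⁻¹ * (q * y i))) =
      Φ (y i) * ∏ j, (1 - b j * y i) := by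
    simp only [hΦ, ← Finset.prod_mul_distrib]
    refine Finset.prod_congr rfl fun j _ => ?_
    have h := hqp j
    rw [qp_step hq (q * (x j)⁻¹ * y i), qp_step hq (b j * y i),
      show q * (q * (x j)⁻¹ * y i) = q * (x j)⁻¹ * (q * y i) by ring,
      show q * (b j * y i) = b j * (q * y i) by ring]
    rw [qp_step hq (b j * y i), show q * (b j * y i) = b j * (q * y i) by ring] at h
    have h1 := left_ne_zero_of_mul h
    have h2 := right_ne_zero_of_mul h
    rw [div_mul_eq_mul_div, div_mul_eq_mul_div, div_eq_div_iff h2 (mul_ne_zero h1 h2)]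
    ring
  have hΦ' : ∏ l, Φ (Function.update y i (q * y i) l) =
      Φ (q * y i) * ∏ l ∈ univ.erase i, Φ (y l) := by
    rw [← Finset.mul_prod_erase univ _ (mem_univ i), Function.update_self]
    congr 1
    refine Finset.prod_congr rfl fun l hl => ?_
    rw [Function.update_of_ne (Finset.ne_of_mem_erase hl)]
  have hΦ0 : ∏ l, Φ (y l) = Φ (y i) * ∏ l ∈ univ.erase i, Φ (y l) :=
    (Finset.mul_prod_erase univ _ (mem_univ i)).symm
  have hV := pairProd_ratio i (F := fun k l => y l - y k)
    (F' := fun k l => Function.update y i (q * y i) l - Function.update y i (q * y i) k)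
    (h := fun j => y j - y i) (g := fun j => y j - q * y i)
    (fun k l hk hl => by simp only [Function.update_of_ne hk, Function.update_of_ne hl])
    (fun j hj => by simp only [Function.update_of_ne hj, Function.update_self]; ring)
    (fun j hj => by simp only [Function.update_of_ne hj, Function.update_self]; ring)
  have hd : ∀ z, ∏ j ∈ univ.erase i, (1 - z / y j) =
      (∏ j ∈ univ.erase i, (y j - z)) / ∏ j ∈ univ.erase i, y j := fun z => by
    rw [← Finset.prod_div_distrib]
    exact Finset.prod_congr rfl fun j _ => one_sub_div (hy0 j)
  have n1 : ∏ j ∈ univ.erase i, (y j - y i) ≠ 0 := Finset.prod_ne_zero_iff.2 fun j hj =>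
    sub_ne_zero.2 (hyi j (Finset.ne_of_mem_erase hj))
  have n2 : ∏ j ∈ univ.erase i, (y j - q * y i) ≠ 0 := Finset.prod_ne_zero_iff.2 fun j hj =>
    sub_ne_zero.2 (hyq j (Finset.ne_of_mem_erase hj))
  have n3 : ∏ j ∈ univ.erase i, y j ≠ 0 := Finset.prod_ne_zero_iff.2 fun j _ => hy0 j
  unfold uniWt
  change (∏ l, Φ (Function.update y i (q * y i) l)) * _ * _ = (∏ l, Φ (y l)) * _ * _
  rw [hΦ', hΦ0, hd, hd]
  generalize (∏ i_1, ∏ j ∈ Ioi i_1, (Function.update y i (q * y i) j -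
    Function.update y i (q * y i) i_1)) = V' at hV ⊢
  generalize (∏ i, ∏ j ∈ Ioi i, (y j - y i)) = V at hV ⊢
  generalize ∏ j ∈ univ.erase i, (y j - y i) = P at *
  generalize ∏ j ∈ univ.erase i, (y j - q * y i) = P' at *
  generalize ∏ j ∈ univ.erase i, y j = Y at *
  generalize ∏ l ∈ univ.erase i, Φ (y l) = R at *
  generalize (∏ j, (1 - (x j)⁻¹ * (q * y i))) = A at *
  generalize (∏ j, (1 - b j * y i)) = B at *
  field_simp
  linear_combination R * V' * P * hΦstep + Φ (y i) * B * R * hV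

/-- The total weight on `|ν| = N` satisfies the recurrence of the q-binomial coefficients. -/
lemma uniWt_rec (hq0 : q ≠ 0) (hq : ‖q‖ < 1) {x b : Fin n → ℂ} (hx : ∀ i, x i ≠ 0)
    (hb : ∀ j, b j ≠ 0) (hxb : ∀ i j, ∀ m : ℤ, x i * b j ≠ q ^ m)
    (hdist : ∀ i j, i ≠ j → ∀ m : ℤ, x i ≠ x j * q ^ m) (N : ℕ) :
    (1 - q ^ (N + 1)) * ∑ ν ∈ piAntidiag univ (N + 1), uniWt q x b (fun i => x i * q ^ ν i) =
      (1 - (∏ i, x i) * (∏ i, b i) * q ^ N) *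
        ∑ ν ∈ piAntidiag univ N, uniWt q x b (fun i => x i * q ^ ν i) := by
  have hy0 : ∀ (ν : Fin n → ℕ) i, x i * q ^ ν i ≠ 0 := fun ν i =>
    mul_ne_zero (hx i) (pow_ne_zero _ hq0)
  have hne : ∀ i j, i ≠ j → ∀ k l : ℕ, x i * q ^ k ≠ x j * q ^ l := fun i j hij k l h => by
    refine hdist i j hij ((l : ℤ) - k) ?_
    have := pow_ne_zero k hq0
    rw [zpow_sub₀ hq0, zpow_natCast, zpow_natCast]
    field_simp
    exact h
  have hinj : ∀ ν : Fin n → ℕ, Function.Injective fun i => x i * q ^ ν i := fun ν i j h => by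
    by_contra hij
    exact hne i j hij _ _ h
  have hprod : ∀ (ν : Fin n → ℕ) M, ν ∈ piAntidiag univ M →
      ∏ i, x i * q ^ ν i = (∏ i, x i) * q ^ M := fun ν M hν => by
    rw [Finset.prod_mul_distrib, Finset.prod_pow_eq_pow_sum, (mem_piAntidiag.1 hν).1]
  have hX : ∏ i, x i ≠ 0 := Finset.prod_ne_zero_iff.2 fun i _ => hx i
  -- both prefactors are partial fraction sums over the coordinates of the lattice point
  have hL : (1 - q ^ (N + 1)) *
      ∑ ν ∈ piAntidiag univ (N + 1), uniWt q x b (fun i => x i * q ^ ν i) =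
      ∑ i, ∑ ν ∈ piAntidiag univ (N + 1), uniWt q x b (fun i => x i * q ^ ν i) *
        ((∏ j, (1 - (x j)⁻¹ * (x i * q ^ ν i))) /
          ∏ j ∈ univ.erase i, (1 - x i * q ^ ν i / (x j * q ^ ν j))) := by
    rw [Finset.sum_comm, Finset.mul_sum]
    refine Finset.sum_congr rfl fun ν hν => ?_
    rw [← Finset.mul_sum, lagrange_sum (b := fun j => (x j)⁻¹) (y := fun i => x i * q ^ ν i)
      (fun j => inv_ne_zero (hx j)) (hinj ν) (hy0 ν), hprod ν _ hν, ← mul_assoc,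
      Finset.prod_inv_distrib, inv_mul_cancel₀ hX, one_mul, mul_comm]
  have hR : (1 - (∏ i, x i) * (∏ i, b i) * q ^ N) *
      ∑ ν ∈ piAntidiag univ N, uniWt q x b (fun i => x i * q ^ ν i) =
      ∑ i, ∑ ν ∈ piAntidiag univ N, uniWt q x b (fun i => x i * q ^ ν i) *
        ((∏ j, (1 - b j * (x i * q ^ ν i))) /
          ∏ j ∈ univ.erase i, (1 - x i * q ^ ν i / (x j * q ^ ν j))) := by
    rw [Finset.sum_comm, Finset.mul_sum]
    refine Finset.sum_congr rfl fun ν hν => ?_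
    rw [← Finset.mul_sum, lagrange_sum (y := fun i => x i * q ^ ν i)
      hb (hinj ν) (hy0 ν), hprod ν _ hν]
    ring
  rw [hL, hR]
  refine Finset.sum_congr rfl fun i _ => ?_
  -- the terms with `ν i = 0` vanish, the others are shifted by one in the direction `i`
  rw [← Finset.sum_filter_of_ne (s := piAntidiag univ (N + 1)) (p := fun ν => ν i ≠ 0)]
  swap
  · intro ν _ hν h0
    apply hν
    rw [Finset.prod_eq_zero (mem_univ i) (by rw [h0]; field_simp [hx i]; simp), zero_div, mul_zero]
  symm
  have hsplit : ∀ ν : Fin n → ℕ, ν i ≠ 0 → ν - Pi.single i 1 + Pi.single i 1 = ν := fun ν h => by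
    ext j
    by_cases hj : j = i
    · subst hj; simp; omega
    · simp [hj]
  refine Finset.sum_nbij' (fun ν => ν + Pi.single i 1) (fun ν => ν - Pi.single i 1) ?_ ?_ ?_ ?_ ?_
  · intro ν hν
    have := (mem_piAntidiag.1 hν).1
    simp only [mem_filter, mem_piAntidiag, mem_univ, implies_true, and_true]
    refine ⟨?_, by simp⟩
    simp [Finset.sum_add_distrib, this]
  · intro ν hν
    simp only [mem_filter, mem_piAntidiag, mem_univ, implies_true, and_true] at hν ⊢
    have h := congrArg (fun f : Fin n → ℕ => ∑ j, f j) (hsplit ν hν.2)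
    simp only [Pi.add_apply, Finset.sum_add_distrib, hν.1, Finset.sum_pi_single', mem_univ,
      if_true] at h
    exact Nat.add_right_cancel h
  · intro ν _; ext j; simp
  · intro ν hν
    exact hsplit ν (mem_filter.1 hν).2
  · intro ν hν
    have hup : (fun j => x j * q ^ (ν + Pi.single i 1 : Fin n → ℕ) j) =
        Function.update (fun j => x j * q ^ ν j) i (q * (x i * q ^ ν i)) := by
      ext j
      by_cases hj : j = i
      · subst hj; simp [pow_succ]; ring
      · simp [hj]
    have h := uniWt_shift (x := x) (b := b) (y := fun j => x j * q ^ ν j) hq i (hy0 ν)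
      (fun j hj => hne j i hj _ _)
      (fun j hj h => hne j i hj (ν j) (ν i + 1) (by rw [h]; ring))
      (fun j => by
        have := qp_lattice_ne_zero hq0 hq (hxb i j) (ν i)
        rwa [zpow_natCast] at this)
    rw [hup, ← h]
    have e1 : x i * q ^ (ν + Pi.single i 1 : Fin n → ℕ) i = q * (x i * q ^ ν i) := by
      simp [pow_succ]; ring
    rw [e1]
    congr 2
    refine Finset.prod_congr rfl fun j hj => ?_
    simp [Finset.ne_of_mem_erase hj]

end Unilateral

/-! ### Both sides of the formula -/

section Evaluation

open Filter Topology

variable {n : ℕ} {q t : ℂ} {a b x : Fin n → ℂ}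

/-- The right-hand side of the summation formula without the factor `(1 - q)ⁿ`. It depends on `a`
only through the inverses `(a i)⁻¹`, so that `a i = 0` encodes the parameter value `(a i)⁻¹ = 0`. -/
noncomputable def mgRHS {n : ℕ} (q t : ℂ) (a b x : Fin n → ℂ) : ℂ :=
  qp q q ^ n * (∏ i, ∏ j, qp q (q * (a i)⁻¹ * (b j)⁻¹)) /
      (qp q t * qp q (q * t⁻¹ * (∏ i, (a i)⁻¹) * (∏ i, b i)⁻¹)) *
    (th q (t * (∏ i, x i) * ∏ i, b i) / ∏ i, ∏ j, th q (x i * b j)) *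
    ∏ i, ∏ j ∈ Finset.Ioi i, x j * th q (x i / x j)

/-- The convergence condition is open in the parameters. -/
lemma exists_enlarge {Q T : ℝ} (α : Fin n → ℝ) (h : Q * ∏ j, α j < T) :
    ∃ ε > 0, Q * ∏ j, (α j + ε) < T := by
  have hc : Tendsto (fun ε : ℝ => Q * ∏ j, (α j + ε)) (𝓝[>] 0) (𝓝 (Q * ∏ j, (α j + 0))) :=
    (Continuous.tendsto (by fun_prop) 0).mono_left nhdsWithin_le_nhds
  simp only [add_zero] at hc
  obtain ⟨ε, h1, h2⟩ := ((hc.eventually_lt_const h).and self_mem_nhdsWithin).exists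
  exact ⟨ε, h2, h1⟩

lemma mgTerm_summable (hq0 : q ≠ 0) (hq : ‖q‖ < 1) (ht0 : t ≠ 0) (ht : ‖t‖ < 1)
    (hb : ∀ j, b j ≠ 0) (hx : ∀ i, x i ≠ 0) (hxb : ∀ i j, ∀ m : ℤ, x i * b j ≠ q ^ m)
    (hlow : ‖q‖ * ∏ j, ‖(a j)⁻¹‖ < ‖t‖ * ∏ j, ‖b j‖) :
    Summable (mgTerm q t a b x) := by
  obtain ⟨ε, hε, h⟩ := exists_enlarge _ hlow
  exact (mgMaj_summable hq0 hq ht0 ht (M := fun j => ‖(a j)⁻¹‖ + ε)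
    (fun j => by positivity) hb h hx hxb).of_norm_bounded
    (norm_mgTerm_le hq (fun j => by linarith) ht0)

lemma qp_low_ne_zero (hq : ‖q‖ < 1) (ht0 : t ≠ 0) (hb : ∀ j, b j ≠ 0)
    (hlow : ‖q‖ * ∏ j, ‖(a j)⁻¹‖ < ‖t‖ * ∏ j, ‖b j‖) :
    qp q (q * t⁻¹ * (∏ i, (a i)⁻¹) * (∏ i, b i)⁻¹) ≠ 0 := by
  refine qp_ne_zero_of_norm_lt hq ?_
  have hT : 0 < ‖t‖ := norm_pos_iff.2 ht0
  have hB : 0 < ∏ j, ‖b j‖ := Finset.prod_pos fun j _ => norm_pos_iff.2 (hb j)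
  rw [norm_mul, norm_mul, norm_mul, norm_inv, norm_inv, norm_prod, norm_prod]
  rw [← div_eq_mul_inv, div_lt_one hB, mul_right_comm, ← div_eq_mul_inv, div_lt_iff₀ hT]
  linarith

/-! ### Degenerate base points -/

/-- If two coordinates of `x` agree modulo powers of `q`, exchanging them is a bijection of the
lattice that changes the sign of the summand, through the Vandermonde factor. -/
lemma mgTerm_sum_degenerate (hq0 : q ≠ 0) {i j : Fin n} (hij : i ≠ j) {m : ℤ}
    (h : x i = x j * q ^ m) : ∑' ν, mgTerm q t a b x ν = 0 := by
  set s := Equiv.swap i j with hs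
  set d : Fin n → ℤ := Pi.single j m - Pi.single i m with hd
  have hpt : ∀ (ν : Fin n → ℤ) l, x l * q ^ (ν (s l) + d l) = x (s l) * q ^ ν (s l) := by
    intro ν l
    rw [zpow_add₀ hq0]
    by_cases hi : l = i
    · subst hi
      simp only [hs, hd, Equiv.swap_apply_left, Pi.sub_apply, Pi.single_eq_same,
        Pi.single_eq_of_ne hij, zero_sub, h, zpow_neg]
      field_simp [zpow_ne_zero m hq0]
    · by_cases hj : l = j
      · subst hj
        simp only [hs, hd, Equiv.swap_apply_right, Pi.sub_apply, Pi.single_eq_same,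
          Pi.single_eq_of_ne hi, sub_zero, h]
        ring
      · simp [hs, hd, Equiv.swap_apply_of_ne_of_ne hi hj, Pi.single_eq_of_ne hi,
          Pi.single_eq_of_ne hj]
  set e : (Fin n → ℤ) ≃ (Fin n → ℤ) :=
    (s.arrowCongr (Equiv.refl ℤ)).trans (Equiv.addRight d) with he
  have hev : ∀ ν l, e ν l = ν (s l) + d l := fun ν l => by simp [he, hs]
  have hterm : ∀ ν, mgTerm q t a b x (e ν) = -mgTerm q t a b x ν := by
    intro ν
    unfold mgTerm
    simp only [hev, hpt]
    have h1 : ∑ l, (ν (s l) + d l) = ∑ l, ν l := by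
      rw [Finset.sum_add_distrib, Equiv.sum_comp s ν]
      simp [hd]
    have h2 : ∏ l, ∏ k, qp q (q * (a k)⁻¹ * (x (s l) * q ^ ν (s l))) /
        qp q (b k * (x (s l) * q ^ ν (s l))) =
        ∏ l, ∏ k, qp q (q * (a k)⁻¹ * (x l * q ^ ν l)) / qp q (b k * (x l * q ^ ν l)) :=
      Equiv.prod_comp s (fun l => ∏ k, qp q (q * (a k)⁻¹ * (x l * q ^ ν l)) /
        qp q (b k * (x l * q ^ ν l)))
    have h3 : ∏ l, ∏ k ∈ Ioi l, (x (s k) * q ^ ν (s k) - x (s l) * q ^ ν (s l)) =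
        -∏ l, ∏ k ∈ Ioi l, (x k * q ^ ν k - x l * q ^ ν l) := by
      have := Matrix.det_permute s (Matrix.vandermonde fun l => x l * q ^ ν l)
      rw [Matrix.det_vandermonde, hs, Equiv.Perm.sign_swap hij] at this
      rw [← Matrix.det_vandermonde (fun l => x (s l) * q ^ ν (s l))]
      refine Eq.trans ?_ (this.trans (by simp))
      rfl
    rw [h1, h2, h3, mul_neg]
  have h1 : ∑' ν, mgTerm q t a b x ν = -∑' ν, mgTerm q t a b x ν := by
    conv_lhs => rw [← e.tsum_eq]
    simp only [hterm, tsum_neg]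
  exact self_eq_neg.1 h1

lemma mgRHS_degenerate (hq0 : q ≠ 0) (hx : ∀ i, x i ≠ 0) {i j : Fin n} (hij : i ≠ j) {m : ℤ}
    (h : x i = x j * q ^ m) : mgRHS q t a b x = 0 := by
  unfold mgRHS
  have hz : ∀ k l : Fin n, k < l → ∀ m : ℤ, x k = x l * q ^ m →
      ∏ i, ∏ j ∈ Finset.Ioi i, x j * th q (x i / x j) = 0 := by
    intro k l hkl m h
    refine Finset.prod_eq_zero (mem_univ k) (Finset.prod_eq_zero (mem_Ioi.2 hkl) ?_)
    rw [h, mul_div_cancel_left₀ _ (hx l), th_zpow hq0, mul_zero]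
  rcases lt_or_gt_of_ne hij with h' | h'
  · rw [hz i j h' m h, mul_zero]
  · rw [hz j i h' (-m) (by rw [h, zpow_neg, mul_inv_cancel_right₀ (zpow_ne_zero m hq0)]), mul_zero]

/-! ### The unilateral case -/

lemma mgTerm_eq_zero_of_neg (hq0 : q ≠ 0) (hx : ∀ i, x i ≠ 0) {ν : Fin n → ℤ} {i : Fin n}
    (hi : ν i < 0) : mgTerm q t x b x ν = 0 := by
  unfold mgTerm
  have h : qp q (q * (x i)⁻¹ * (x i * q ^ ν i)) = 0 := by
    refine qp_eq_zero (i := (-1 - ν i).toNat) ?_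
    rw [mul_assoc, inv_mul_cancel_left₀ (hx i), ← zpow_natCast, ← zpow_one_add₀ hq0,
      ← zpow_add₀ hq0, show (((-1 - ν i).toNat : ℤ) + (1 + ν i)) = 0 by omega, zpow_zero]
  rw [Finset.prod_eq_zero (mem_univ i) (Finset.prod_eq_zero (mem_univ i) (by rw [h, zero_div])),
    mul_zero, zero_mul]

/-- For `a = x` the series runs over `ℕⁿ`; grouping it by `|ν|` leaves a q-binomial series. -/
lemma mg_base_generic (hq0 : q ≠ 0) (hq : ‖q‖ < 1) (ht0 : t ≠ 0) (ht : ‖t‖ < 1)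
    (hb : ∀ j, b j ≠ 0) (hx : ∀ i, x i ≠ 0) (hxb : ∀ i j, ∀ m : ℤ, x i * b j ≠ q ^ m)
    (hlow : ‖q‖ * ∏ j, ‖(x j)⁻¹‖ < ‖t‖ * ∏ j, ‖b j‖)
    (hdist : ∀ i j, i ≠ j → ∀ m : ℤ, x i ≠ x j * q ^ m) :
    ∑' ν, mgTerm q t x b x ν = uniWt q x b x * qp q ((∏ i, x i) * (∏ i, b i) * t) / qp q t := by
  set g : (Fin n → ℕ) → (Fin n → ℤ) := fun ν i => (ν i : ℤ) with hg
  have hginj : Function.Injective g := fun ν μ h => by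
    ext i; simpa [hg] using congrFun h i
  have hsupp : Function.support (mgTerm q t x b x) ⊆ Set.range g := by
    intro ν hν
    refine ⟨fun i => (ν i).toNat, ?_⟩
    ext i
    have : 0 ≤ ν i := by
      by_contra hneg
      exact hν (mgTerm_eq_zero_of_neg hq0 hx (not_le.1 hneg))
    simp [hg, this]
  have hterm : ∀ ν, mgTerm q t x b x (g ν) =
      t ^ (∑ i, ν i) * uniWt q x b (fun i => x i * q ^ ν i) := by
    intro ν
    simp only [mgTerm, uniWt, hg, zpow_natCast]
    rw [← Nat.cast_sum, zpow_natCast, mul_assoc]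
  set S : ℕ → ℂ := fun N => ∑ ν ∈ piAntidiag univ N, uniWt q x b (fun i => x i * q ^ ν i) with hS
  have hsum : Summable fun ν => mgTerm q t x b x (g ν) :=
    (mgTerm_summable hq0 hq ht0 ht hb hx hxb hlow).comp_injective hginj
  have hfib := hsum.hasSum.tsum_fiberwise (fun ν : Fin n → ℕ => ∑ i, ν i)
  have hfibN : ∀ N : ℕ, (∑' ν : ((fun ν : Fin n → ℕ => ∑ i, ν i) ⁻¹' {N}),
      mgTerm q t x b x (g ν)) = t ^ N * S N := by
    intro N
    have hset : ((fun ν : Fin n → ℕ => ∑ i, ν i) ⁻¹' {N}) =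
        ((piAntidiag univ N : Finset (Fin n → ℕ)) : Set (Fin n → ℕ)) := by
      ext ν; simp
    rw [hset, Finset.tsum_subtype' _ (fun ν => mgTerm q t x b x (g ν)), hS, Finset.mul_sum]
    refine Finset.sum_congr rfl fun ν hν => ?_
    rw [hterm, (mem_piAntidiag.1 hν).1]
  simp only [hfibN] at hfib
  rw [← hginj.tsum_eq hsupp, ← hfib.tsum_eq,
    q_binomial hq ht (uniWt_rec hq0 hq hx hb hxb hdist) hfib.summable]
  simp [hS]

lemma mgRHS_base (hq : ‖q‖ < 1) (ht0 : t ≠ 0) (hq0 : q ≠ 0)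
    (hb : ∀ j, b j ≠ 0) (hx : ∀ i, x i ≠ 0) (hxb : ∀ i j, ∀ m : ℤ, x i * b j ≠ q ^ m)
    (hlow : ‖q‖ * ∏ j, ‖(x j)⁻¹‖ < ‖t‖ * ∏ j, ‖b j‖) :
    mgRHS q t x b x = uniWt q x b x * qp q ((∏ i, x i) * (∏ i, b i) * t) / qp q t := by
  have h1 := qp_low_ne_zero hq ht0 hb hlow
  have hth : ∀ i j, th q (x i * b j) ≠ 0 := fun i j =>
    th_ne_zero hq0 hq (mul_ne_zero (hx i) (hb j)) (hxb i j)
  have h2 : (∏ i, ∏ j, qp q (q * (x i)⁻¹ * (b j)⁻¹)) / ∏ i, ∏ j, th q (x i * b j) =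
      ∏ i, ∏ j, (qp q (b j * x i))⁻¹ := by
    rw [← Finset.prod_div_distrib]
    refine Finset.prod_congr rfl fun i _ => ?_
    rw [← Finset.prod_div_distrib]
    refine Finset.prod_congr rfl fun j _ => ?_
    have h := hth i j
    unfold th at h ⊢
    rw [show q * (x i)⁻¹ * (b j)⁻¹ = q / (x i * b j) by rw [mul_assoc, ← mul_inv]; rfl,
      mul_comm (b j)]
    have h3 := left_ne_zero_of_mul h
    have h4 := right_ne_zero_of_mul h
    field_simp
  have h3 : th q (t * (∏ i, x i) * ∏ i, b i) = qp q ((∏ i, x i) * (∏ i, b i) * t) *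
      qp q (q * t⁻¹ * (∏ i, (x i)⁻¹) * (∏ i, b i)⁻¹) := by
    unfold th
    rw [Finset.prod_inv_distrib, mul_assoc t, mul_comm t]
    congr 2
    rw [div_eq_mul_inv, mul_inv, mul_inv]
    ring
  have h4 : uniWt q x b x = qp q q ^ n * (∏ i, ∏ j, (qp q (b j * x i))⁻¹) *
      ∏ i, ∏ j ∈ Finset.Ioi i, x j * th q (x i / x j) := by
    unfold uniWt
    simp only [div_eq_mul_inv (qp q _) (qp q _), Finset.prod_mul_distrib (f := fun j => qp q _)]
    rw [Finset.prod_mul_distrib, prod_prod_eq_diag_mul (fun i j => qp q (q * (x j)⁻¹ * x i))]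
    have h5 : ∏ i, qp q (q * (x i)⁻¹ * x i) = qp q q ^ n := by
      rw [← Fin.prod_const]
      exact Finset.prod_congr rfl fun i _ => by rw [inv_mul_cancel_right₀ (hx i)]
    have h6 : (∏ i, ∏ j ∈ Ioi i, qp q (q * (x j)⁻¹ * x i) * qp q (q * (x i)⁻¹ * x j)) *
        (∏ i, ∏ j ∈ Ioi i, (x j - x i)) =
        ∏ i, ∏ j ∈ Finset.Ioi i, x j * th q (x i / x j) := by
      rw [← Finset.prod_mul_distrib]
      refine Finset.prod_congr rfl fun i _ => ?_
      rw [← Finset.prod_mul_distrib]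
      refine Finset.prod_congr rfl fun j _ => ?_
      unfold th
      have hxi := hx i
      have hxj := hx j
      rw [qp_step hq (x i / x j), show q * (x i / x j) = q * (x j)⁻¹ * x i by field_simp,
        show q / (x i / x j) = q * (x i)⁻¹ * x j by field_simp]
      field_simp
    rw [h5, ← h6]
    ring
  unfold mgRHS
  rw [h3, h4, ← h2]
  generalize qp q (q * t⁻¹ * (∏ i, (x i)⁻¹) * (∏ i, b i)⁻¹) = L at h1 ⊢
  generalize ∏ i, ∏ j ∈ Finset.Ioi i, x j * th q (x i / x j) = V
  generalize ∏ i, ∏ j, qp q (q * (x i)⁻¹ * (b j)⁻¹) = N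
  generalize ∏ i, ∏ j, th q (x i * b j) = D
  generalize qp q ((∏ i, x i) * (∏ i, b i) * t) = E
  field_simp

lemma mg_base (hq0 : q ≠ 0) (hq : ‖q‖ < 1) (ht0 : t ≠ 0) (ht : ‖t‖ < 1)
    (hb : ∀ j, b j ≠ 0) (hx : ∀ i, x i ≠ 0) (hxb : ∀ i j, ∀ m : ℤ, x i * b j ≠ q ^ m)
    (hlow : ‖q‖ * ∏ j, ‖(x j)⁻¹‖ < ‖t‖ * ∏ j, ‖b j‖) :
    ∑' ν, mgTerm q t x b x ν = mgRHS q t x b x := by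
  by_cases hdist : ∀ i j, i ≠ j → ∀ m : ℤ, x i ≠ x j * q ^ m
  · rw [mg_base_generic hq0 hq ht0 ht hb hx hxb hlow hdist, mgRHS_base hq ht0 hq0 hb hx hxb hlow]
  · push Not at hdist
    obtain ⟨i, j, hij, m, h⟩ := hdist
    rw [mgTerm_sum_degenerate hq0 hij h, mgRHS_degenerate hq0 hx hij h]

/-! ### Quasi-periodicity in the base point -/

lemma mgTerm_sum_shift (hq0 : q ≠ 0) (ht0 : t ≠ 0) (k : Fin n) :
    ∑' ν, mgTerm q t a b (Function.update x k (q * x k)) ν = t⁻¹ * ∑' ν, mgTerm q t a b x ν := by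
  rw [← (Equiv.addRight (Pi.single k (1 : ℤ))).tsum_eq (mgTerm q t a b x), ← tsum_mul_left]
  refine tsum_congr fun ν => ?_
  have hy : ∀ l, Function.update x k (q * x k) l * q ^ ν l =
      x l * q ^ (ν + Pi.single k 1 : Fin n → ℤ) l := by
    intro l
    by_cases h : l = k
    · subst h
      simp only [Function.update_self, Pi.add_apply, Pi.single_eq_same, zpow_add_one₀ hq0]
      ring
    · simp [Function.update_of_ne h, Pi.single_eq_of_ne h]
  have hsum : ∑ l, (ν + Pi.single k 1 : Fin n → ℤ) l = (∑ l, ν l) + 1 := by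
    simp [Finset.sum_add_distrib]
  unfold mgTerm
  simp only [hy, Equiv.coe_addRight]
  rw [hsum, zpow_add_one₀ ht0]
  field_simp

lemma mgRHS_shift (hq0 : q ≠ 0) (hq : ‖q‖ < 1) (ht0 : t ≠ 0) (hb : ∀ j, b j ≠ 0)
    (hx : ∀ i, x i ≠ 0) (k : Fin n) :
    mgRHS q t a b (Function.update x k (q * x k)) = t⁻¹ * mgRHS q t a b x := by
  set x' := Function.update x k (q * x k) with hx'
  have hxk : x' k = q * x k := by simp [hx']
  have hxo : ∀ l, l ≠ k → x' l = x l := fun l hl => by simp [hx', hl]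
  have hX0 : ∏ i, x i ≠ 0 := Finset.prod_ne_zero_iff.2 fun i _ => hx i
  have hB0 : ∏ i, b i ≠ 0 := Finset.prod_ne_zero_iff.2 fun i _ => hb i
  have hX : ∏ i, x i = x k * ∏ i ∈ univ.erase k, x i :=
    (Finset.mul_prod_erase univ _ (mem_univ k)).symm
  have hX' : ∏ i, x' i = q * ∏ i, x i := by
    rw [hX, ← Finset.mul_prod_erase univ _ (mem_univ k), hxk, mul_assoc]
    congr 2
    exact Finset.prod_congr rfl fun l hl => hxo l (Finset.ne_of_mem_erase hl)
  have h1 : th q (t * (∏ i, x' i) * ∏ i, b i) =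
      -(t * (∏ i, x i) * ∏ i, b i)⁻¹ * th q (t * (∏ i, x i) * ∏ i, b i) := by
    rw [hX', ← th_mul_q hq0 hq (mul_ne_zero (mul_ne_zero ht0 hX0) hB0)]
    congr 1
    ring
  have h2 : ∏ i, ∏ j, th q (x' i * b j) =
      (∏ j, -(x k * b j)⁻¹) * ∏ i, ∏ j, th q (x i * b j) := by
    rw [← Finset.mul_prod_erase univ _ (mem_univ k),
      ← Finset.mul_prod_erase univ (fun i => ∏ j, th q (x i * b j)) (mem_univ k), ← mul_assoc,
      ← Finset.prod_mul_distrib]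
    congr 1
    · refine Finset.prod_congr rfl fun j _ => ?_
      rw [hxk, mul_assoc, th_mul_q hq0 hq (mul_ne_zero (hx k) (hb j))]
    · refine Finset.prod_congr rfl fun l hl => ?_
      rw [hxo l (Finset.ne_of_mem_erase hl)]
  have h3 := pairProd_ratio k (F := fun i j => x j * th q (x i / x j))
    (F' := fun i j => x' j * th q (x' i / x' j)) (h := fun _ => 1) (g := fun j => -(x j / x k))
    (fun i j hi hj => by simp only [hxo i hi, hxo j hj])
    (fun j hj => by
      have h := th_mul_q hq0 hq (div_ne_zero (hx k) (hx j))
      simp only [hxo j hj, hxk]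
      rw [mul_div_assoc, h, inv_div]
      ring)
    (fun j hj => by
      have hxj := hx j
      have hxk0 := hx k
      have h := th_mul_q hq0 hq (z := x j / (q * x k))
        (div_ne_zero (hx j) (mul_ne_zero hq0 (hx k)))
      rw [show q * (x j / (q * x k)) = x j / x k by field_simp] at h
      simp only [hxo j hj, hxk]
      rw [h]
      field_simp)
  rw [Finset.prod_const_one, mul_one] at h3
  have h4 : ∏ j ∈ univ.erase k, -(x j / x k) =
      (∏ j ∈ univ.erase k, x j) * (∏ j ∈ univ.erase k, -(x k)⁻¹) := by
    rw [← Finset.prod_mul_distrib]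
    exact Finset.prod_congr rfl fun j _ => by ring
  have h5 : ∏ j, -(x k * b j)⁻¹ =
      -(x k)⁻¹ * (∏ j ∈ univ.erase k, -(x k)⁻¹) * (∏ j, b j)⁻¹ := by
    rw [Finset.mul_prod_erase univ (fun _ => -(x k)⁻¹) (mem_univ k), ← Finset.prod_inv_distrib,
      ← Finset.prod_mul_distrib]
    exact Finset.prod_congr rfl fun j _ => by rw [mul_inv]; ring
  have h6 : ∏ j ∈ univ.erase k, -(x k)⁻¹ ≠ 0 :=
    Finset.prod_ne_zero_iff.2 fun _ _ => neg_ne_zero.2 (inv_ne_zero (hx k))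
  have h7 : ∏ j ∈ univ.erase k, x j ≠ 0 := Finset.prod_ne_zero_iff.2 fun i _ => hx i
  have hxk0 := hx k
  unfold mgRHS
  rw [h1, h2, h3, h4, h5, hX]
  generalize qp q q ^ n * (∏ i, ∏ j, qp q (q * (a i)⁻¹ * (b j)⁻¹)) /
      (qp q t * qp q (q * t⁻¹ * (∏ i, (a i)⁻¹) * (∏ i, b i)⁻¹)) = K
  generalize th q (t * (x k * ∏ i ∈ univ.erase k, x i) * ∏ i, b i) = E
  generalize ∏ i, ∏ j, th q (x i * b j) = D
  generalize ∏ i, ∏ j ∈ Finset.Ioi i, x j * th q (x i / x j) = V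
  generalize ∏ j ∈ univ.erase k, -(x k)⁻¹ = P at h6 ⊢
  generalize ∏ j ∈ univ.erase k, x j = Y at h7 ⊢
  generalize ∏ i, b i = B at hB0 ⊢
  field_simp

/-- The summation formula is preserved by `x k ↦ q ^ m * x k`. -/
lemma mg_shift_iterate (hq0 : q ≠ 0) (hq : ‖q‖ < 1) (ht0 : t ≠ 0) (hb : ∀ j, b j ≠ 0)
    (hx : ∀ i, x i ≠ 0) (k : Fin n) (h : ∑' ν, mgTerm q t a b x ν = mgRHS q t a b x) (m : ℕ) :
    ∑' ν, mgTerm q t a b (Function.update x k (q ^ m * x k)) ν =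
      mgRHS q t a b (Function.update x k (q ^ m * x k)) := by
  induction m with
  | zero => simpa using h
  | succ m ih =>
    set z := Function.update x k (q ^ m * x k) with hz
    have hz0 : ∀ i, z i ≠ 0 := fun i => by
      by_cases hi : i = k
      · subst hi; simpa [hz] using ⟨fun h => (hq0 h).elim, hx i⟩
      · simpa [hz, hi] using hx i
    have e : Function.update x k (q ^ (m + 1) * x k) = Function.update z k (q * z k) := by
      simp [hz, pow_succ']; ring_nf
    rw [e, mgTerm_sum_shift hq0 ht0, mgRHS_shift hq0 hq ht0 hb hz0, ih]

end Evaluation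

/-! ### Analytic continuation in the parameters -/

section Continuation

open Filter Topology

variable {n : ℕ} {q t : ℂ} {b : Fin n → ℂ}

/-- The parameters `a` with `(a k)⁻¹` replaced by `c`; the value `c = 0` is allowed. -/
noncomputable def setInv (a : Fin n → ℂ) (k : Fin n) (c : ℂ) : Fin n → ℂ :=
  Function.update a k c⁻¹

lemma setInv_inv (a : Fin n → ℂ) (k : Fin n) (c : ℂ) (j : Fin n) :
    (setInv a k c j)⁻¹ = if j = k then c else (a j)⁻¹ := by
  unfold setInv
  split_ifs with h
  · subst h; simp
  · simp [h]

lemma setInv_inv_differentiable (a : Fin n → ℂ) (k j : Fin n) :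
    Differentiable ℂ fun c => (setInv a k c j)⁻¹ := by
  simp only [setInv_inv]
  split_ifs <;> fun_prop

lemma mgTerm_differentiable (hq : ‖q‖ < 1) (a x : Fin n → ℂ) (k : Fin n) (ν : Fin n → ℤ) :
    Differentiable ℂ fun c => mgTerm q t (setInv a k c) b x ν := by
  unfold mgTerm
  have h : ∀ i j, Differentiable ℂ fun c => qp q (q * (setInv a k c j)⁻¹ * (x i * q ^ ν i)) :=
    fun i j => (qp_differentiable hq).comp
      (((setInv_inv_differentiable a k j).const_mul q).mul_const _)
  fun_prop

/-- Identity theorem in the variable `c = (a k)⁻¹`: it suffices to know the formula at the points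
`c = q ^ m * (x k)⁻¹`, which accumulate at `0`. -/
lemma mg_continuation_step (hq0 : q ≠ 0) (hq : ‖q‖ < 1) (ht0 : t ≠ 0) (ht : ‖t‖ < 1)
    (hb : ∀ j, b j ≠ 0) {a x : Fin n → ℂ} (hx : ∀ i, x i ≠ 0)
    (hxb : ∀ i j, ∀ m : ℤ, x i * b j ≠ q ^ m)
    (hlow : ‖q‖ * ∏ j, ‖(a j)⁻¹‖ < ‖t‖ * ∏ j, ‖b j‖) (k : Fin n)
    (ih : ∀ m : ℕ, ‖q‖ * ∏ j, ‖(setInv a k (q ^ m * (x k)⁻¹) j)⁻¹‖ < ‖t‖ * ∏ j, ‖b j‖ →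
      ∑' ν, mgTerm q t (setInv a k (q ^ m * (x k)⁻¹)) b x ν =
        mgRHS q t (setInv a k (q ^ m * (x k)⁻¹)) b x) :
    ∑' ν, mgTerm q t a b x ν = mgRHS q t a b x := by
  obtain ⟨ε, hε, hM⟩ := exists_enlarge _ hlow
  set M : Fin n → ℝ := fun j => ‖(a j)⁻¹‖ + ε with hMdef
  have hMpos : ∀ j, 0 < M j := fun j => by positivity
  set U : Set ℂ := Metric.ball 0 (M k) with hU
  have hbd : ∀ c ∈ U, ∀ j, ‖(setInv a k c j)⁻¹‖ ≤ M j := by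
    intro c hc j
    rw [setInv_inv]
    split_ifs with h
    · subst h
      exact (mem_ball_zero_iff.1 hc).le
    · simp only [hMdef]; linarith
  have hlowU : ∀ c ∈ U, ‖q‖ * ∏ j, ‖(setInv a k c j)⁻¹‖ < ‖t‖ * ∏ j, ‖b j‖ := by
    intro c hc
    refine lt_of_le_of_lt ?_ hM
    gcongr with j _
    exact hbd c hc j
  have hf : DifferentiableOn ℂ (fun c => ∑' ν, mgTerm q t (setInv a k c) b x ν) U :=
    Complex.differentiableOn_tsum_of_summable_norm
      (mgMaj_summable hq0 hq ht0 ht hMpos hb hM hx hxb)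
      (fun ν => (mgTerm_differentiable hq a x k ν).differentiableOn) Metric.isOpen_ball
      (fun ν c hc => norm_mgTerm_le hq (hbd c hc) ht0 ν)
  have hg : DifferentiableOn ℂ (fun c => mgRHS q t (setInv a k c) b x) U := by
    have h1 : ∀ i j, Differentiable ℂ fun c => qp q (q * (setInv a k c i)⁻¹ * (b j)⁻¹) :=
      fun i j => (qp_differentiable hq).comp
        (((setInv_inv_differentiable a k i).const_mul q).mul_const _)
    have h2 : Differentiable ℂ fun c =>
        qp q (q * t⁻¹ * (∏ i, (setInv a k c i)⁻¹) * (∏ i, b i)⁻¹) := by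
      have h3 : Differentiable ℂ fun c => ∏ i, (setInv a k c i)⁻¹ := by
        have := setInv_inv_differentiable a k
        fun_prop
      exact (qp_differentiable hq).comp ((h3.const_mul _).mul_const _)
    have h4 : Differentiable ℂ fun c => ∏ i, ∏ j, qp q (q * (setInv a k c i)⁻¹ * (b j)⁻¹) := by
      fun_prop
    unfold mgRHS
    refine ((DifferentiableOn.div (h4.const_mul _).differentiableOn
      (h2.const_mul _).differentiableOn fun c hc => ?_).mul_const _).mul_const _
    exact mul_ne_zero (qp_ne_zero_of_norm_lt hq ht) (qp_low_ne_zero hq ht0 hb (hlowU c hc))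
  have h0U : (0 : ℂ) ∈ U := Metric.mem_ball_self (hMpos k)
  have hseq : Tendsto (fun m : ℕ => q ^ m * (x k)⁻¹) atTop (𝓝[≠] 0) := by
    refine tendsto_nhdsWithin_iff.2 ⟨?_, Eventually.of_forall fun m =>
      mul_ne_zero (pow_ne_zero m hq0) (inv_ne_zero (hx k))⟩
    simpa using (tendsto_pow_atTop_nhds_zero_of_norm_lt_one hq).mul_const (x k)⁻¹
  have hev : ∀ᶠ m : ℕ in atTop, q ^ m * (x k)⁻¹ ∈ U :=
    (hseq.mono_right nhdsWithin_le_nhds).eventually (Metric.isOpen_ball.mem_nhds h0U)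
  have hfreq : ∃ᶠ c in 𝓝[≠] (0 : ℂ), (∑' ν, mgTerm q t (setInv a k c) b x ν) =
      mgRHS q t (setInv a k c) b x :=
    hseq.frequently (hev.mono fun m hm => ih m (hlowU _ hm)).frequently
  have heq := (hf.analyticOnNhd Metric.isOpen_ball).eqOn_of_preconnected_of_frequently_eq
    (hg.analyticOnNhd Metric.isOpen_ball) (convex_ball 0 (M k)).isPreconnected h0U hfreq
  have hak : (a k)⁻¹ ∈ U := by
    rw [hU, mem_ball_zero_iff]; simp only [hMdef]; linarith
  have ha : setInv a k (a k)⁻¹ = a := by simp [setInv]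
  simpa only [ha] using heq hak

/-- The formula when only the parameters indexed by `s` are free, the others being `a j = x j`. -/
lemma mg_eval (hq0 : q ≠ 0) (hq : ‖q‖ < 1) (ht0 : t ≠ 0) (ht : ‖t‖ < 1)
    (hb : ∀ j, b j ≠ 0) (s : Finset (Fin n)) :
    ∀ a x : Fin n → ℂ, (∀ j ∉ s, a j = x j) → (∀ i, x i ≠ 0) →
      (∀ i j, ∀ m : ℤ, x i * b j ≠ q ^ m) →
      ‖q‖ * ∏ j, ‖(a j)⁻¹‖ < ‖t‖ * ∏ j, ‖b j‖ →
      ∑' ν, mgTerm q t a b x ν = mgRHS q t a b x := by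
  induction s using Finset.induction_on with
  | empty =>
    intro a x hax hx hxb hlow
    obtain rfl : a = x := funext fun j => hax j (Finset.notMem_empty j)
    exact mg_base hq0 hq ht0 ht hb hx hxb hlow
  | insert k s _ ih =>
    intro a x hax hx hxb hlow
    refine mg_continuation_step hq0 hq ht0 ht hb hx hxb hlow k fun m hm => ?_
    have hqm : q ^ m ≠ 0 := pow_ne_zero m hq0
    -- the base point at which the parameter `c = q ^ m * (x k)⁻¹` satisfies `a k = y k`
    set y := Function.update x k ((q ^ m)⁻¹ * x k) with hy
    have hyk : y k = (q ^ m)⁻¹ * x k := by simp [hy]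
    have hyo : ∀ j, j ≠ k → y j = x j := fun j hj => by simp [hy, hj]
    have hy0 : ∀ i, y i ≠ 0 := fun i => by
      by_cases hi : i = k
      · subst hi; rw [hyk]; exact mul_ne_zero (inv_ne_zero hqm) (hx i)
      · rw [hyo i hi]; exact hx i
    have hback : Function.update y k (q ^ m * y k) = x := by
      rw [hyk, mul_inv_cancel_left₀ hqm, hy, Function.update_idem, Function.update_eq_self]
    have hyb : ∀ i j, ∀ l : ℤ, y i * b j ≠ q ^ l := by
      intro i j l h
      by_cases hi : i = k
      · subst hi
        rw [hyk] at h
        refine hxb i j (m + l) ?_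
        rw [zpow_add₀ hq0, ← h, zpow_natCast]
        field_simp
      · rw [hyo i hi] at h
        exact hxb i j l h
    have hay : ∀ j ∉ s, setInv a k (q ^ m * (x k)⁻¹) j = y j := by
      intro j hj
      by_cases hjk : j = k
      · subst hjk; simp [setInv, hyk, mul_comm]
      · rw [hyo j hjk, setInv, Function.update_of_ne hjk]
        exact hax j (by simp [hjk, hj])
    have := mg_shift_iterate hq0 hq ht0 hb hy0 k (ih _ y hay hy0 hyb hm) m
    rwa [hback] at this

end Continuation

/-- Milne–Gustafson summation formula. -/
theorem milne_gustafson_summation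
    (q : ℝ) (hq0 : 0 < q) (hq1 : q < 1) (n : ℕ) (hn : 1 ≤ n)
    (a b : Fin n → ℂ) (ha : ∀ i, a i ≠ 0) (hb : ∀ i, b i ≠ 0)
    (t : ℂ) (ht0 : t ≠ 0)
    (x : Fin n → ℂ) (hx : ∀ i, x i ≠ 0)
    (hlow : ‖(q : ℂ) * (∏ i, a i)⁻¹ * (∏ i, b i)⁻¹‖ < ‖t‖) (hupp : ‖t‖ < 1)
    (hxb : ∀ i j, ∀ m : ℤ, x i * b j ≠ (q : ℂ) ^ m) :
    Summable (mgTerm (q : ℂ) t a b x) ∧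
      mgSum (q : ℂ) t a b x =
        (1 - (q : ℂ)) ^ n * qp (q : ℂ) (q : ℂ) ^ n *
            (∏ i, ∏ j, qp (q : ℂ) ((q : ℂ) * (a i)⁻¹ * (b j)⁻¹)) /
            (qp (q : ℂ) t *
              qp (q : ℂ) ((q : ℂ) * t⁻¹ * (∏ i, a i)⁻¹ * (∏ i, b i)⁻¹)) *
          (th (q : ℂ) (t * (∏ i, x i) * ∏ i, b i) /
            ∏ i, ∏ j, th (q : ℂ) (x i * b j)) *
          ∏ i, ∏ j ∈ Finset.Ioi i, x j * th (q : ℂ) (x i / x j) := by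
  have hqc0 : (q : ℂ) ≠ 0 := by exact_mod_cast hq0.ne'
  have hqc : ‖(q : ℂ)‖ < 1 := by
    rw [Complex.norm_real, Real.norm_of_nonneg hq0.le]; exact hq1
  have hB : 0 < ∏ j, ‖b j‖ := Finset.prod_pos fun j _ => norm_pos_iff.2 (hb j)
  have hlow' : ‖(q : ℂ)‖ * ∏ j, ‖(a j)⁻¹‖ < ‖t‖ * ∏ j, ‖b j‖ := by
    rw [← Finset.prod_inv_distrib, norm_mul, norm_mul, norm_prod, norm_inv, norm_prod,
      ← div_eq_mul_inv, div_lt_iff₀ hB] at hlow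
    exact hlow
  refine ⟨mgTerm_summable hqc0 hqc ht0 hupp hb hx hxb hlow', ?_⟩
  rw [mgSum, mg_eval hqc0 hqc ht0 hupp hb Finset.univ a x (fun j hj => absurd (mem_univ j) hj)
    hx hxb hlow', mgRHS, Finset.prod_inv_distrib]
  simp only [mul_assoc, mul_div_assoc]
end

section
/- Suppose |a_1⁻¹⋯a_n⁻¹ b_1⁻¹⋯b_n⁻¹| < |t| < 1 and that x_i b_j ∉ qᶻ for all 1 ≤ i, j ≤ n. Then I(t;x) = [(1 − t a_1⋯a_n b_1⋯b_n) / (a_1⋯a_n (1 − t))] · (x_1⋯x_n) · I(qt;x). (Recurrence in the exponent parameter, Lemma 3.2 of the paper, written multiplicatively with t = q^α.) -/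
/-!
Writing the product of differences as a Vandermonde determinant, the summand at `ν` becomes a
determinant whose `i`-th row depends on `ν i` only (`mgTerm_eq_det`). By absolute convergence the
multiple sum is therefore the determinant of the one-variable moments
`S_k(x_i) = ∑_m t^m w(z) z^k`, `z = x_i q^m`, `0 ≤ k < n`, where `w` is the one-variable weight
(`hasSum_det`). Likewise `(∏ x_i)` times the sum at `q t` is the determinant of the moments of
orders `1, …, n` (`mgTerm_shift_eq_det`). The bounds on `|t|` are what makes all moments of order
`0, …, n` converge (`mgMoment_summable`).

The functional equation of `(a)_∞` gives `w(qz) ∏ (1 - q z / a_j) = w(z) ∏ (1 - b_j z)`, so by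
translation invariance of the lattice `∑ c_k S_k(x_i) = 0` for all `i`, where the `c_k` are the
coefficients of `∏ (1 - z/a_j) - t ∏ (1 - b_j z)` (`mgMoment_relation`). Its extreme coefficients
are `c_0 = 1 - t` and `c_n = (-1)^n ((∏ a_j)⁻¹ - t ∏ b_j)`, and linear algebra turns the relation
into `c_0 det(S_0, …, S_{n-1}) = (-1)^n c_n det(S_1, …, S_n)` (`det_relation`), which is the claim.
-/

open scoped BigOperators
open Finset

open Filter Topology

/-! ### The one-variable weight and its moments -/

lemma qp_eq {q : ℂ} (hq : ‖q‖ < 1) (a : ℂ) : qp q a = (1 - a) * qp q (q * a) := by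
  unfold qp
  have hs : Multipliable (fun i : ℕ => 1 - q ^ (i + 1) * a) := by
    have : Summable (fun i : ℕ => ‖-(q ^ (i + 1) * a)‖) := by
      simp only [norm_neg, norm_mul, norm_pow]
      exact ((summable_nat_add_iff 1).2
        (summable_geometric_of_lt_one (norm_nonneg q) hq)).mul_right _
    simpa [sub_eq_add_neg] using multipliable_one_add_of_summable this
  rw [tprod_eq_zero_mul' (f := fun i : ℕ => 1 - q ^ i * a) hs]
  simp only [pow_zero, one_mul, pow_succ, mul_assoc]

/-- The one-variable weight `∏_j (q a_j⁻¹ z)_∞ / (b_j z)_∞`. -/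
noncomputable def mgWeight {n : ℕ} (q : ℂ) (a b : Fin n → ℂ) (z : ℂ) : ℂ :=
  ∏ j, qp q (q * (a j)⁻¹ * z) / qp q (b j * z)

/-- The `q`-Pearson equation for the weight. -/
lemma mgWeight_shift {n : ℕ} {q : ℂ} (hq : ‖q‖ < 1) (a b : Fin n → ℂ) (z : ℂ)
    (hz : ∀ j, 1 - b j * z ≠ 0) :
    mgWeight q a b (z * q) * ∏ j, (1 - q * (a j)⁻¹ * z) =
      mgWeight q a b z * ∏ j, (1 - b j * z) := by
  unfold mgWeight
  rw [← Finset.prod_mul_distrib, ← Finset.prod_mul_distrib]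
  refine Finset.prod_congr rfl fun j _ => ?_
  have h := hz j
  rw [qp_eq hq (q * (a j)⁻¹ * z), qp_eq hq (b j * z),
    show q * (a j)⁻¹ * (z * q) = q * (q * (a j)⁻¹ * z) by ring,
    show b j * (z * q) = q * (b j * z) by ring, div_mul_eq_mul_div, div_mul_eq_mul_div,
    mul_comm _ (1 - b j * z), mul_div_mul_left _ _ h, mul_comm]

/-- The term at `m ∈ ℤ` of the `k`-th moment, a one-variable Jackson sum over `y q^ℤ`. -/
noncomputable def mgMoment {n : ℕ} (q t : ℂ) (a b : Fin n → ℂ) (y : ℂ) (k : ℕ) (m : ℤ) : ℂ :=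
  t ^ m * mgWeight q a b (y * q ^ m) * (y * q ^ m) ^ k

lemma mgMoment_shift {n : ℕ} {q t : ℂ} (hq : ‖q‖ < 1) (hq0 : q ≠ 0) (ht0 : t ≠ 0)
    (a b : Fin n → ℂ) (y : ℂ) (hy : ∀ j (m : ℤ), 1 - b j * (y * q ^ m) ≠ 0) (k : ℕ) (m : ℤ) :
    mgMoment q t a b y k (m + 1) * ∏ j, (1 - q * (a j)⁻¹ * (y * q ^ m)) =
      mgMoment q t a b y k m * (t * q ^ k * ∏ j, (1 - b j * (y * q ^ m))) := by
  have h := mgWeight_shift hq a b (y * q ^ m) fun j => hy j m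
  unfold mgMoment
  rw [zpow_add_one₀ hq0, zpow_add_one₀ ht0, ← mul_assoc y, mul_pow (y * q ^ m) q k]
  linear_combination t ^ m * t * ((y * q ^ m) ^ k * q ^ k) * h

/-- Ratio test for a sequence satisfying `u (m+1) * d m = u m * e m`. -/
lemma summable_of_ratio {u d e : ℕ → ℂ} {D E : ℂ} (h : ∀ m, u (m + 1) * d m = u m * e m)
    (hd : Tendsto d atTop (𝓝 D)) (he : Tendsto e atTop (𝓝 E)) (hED : ‖E‖ < ‖D‖) :
    Summable u := by
  have hD : D ≠ 0 := by
    rintro rfl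
    simp only [norm_zero] at hED
    exact absurd hED (not_lt.2 (norm_nonneg E))
  have hlim : Tendsto (fun m => ‖e m / d m‖) atTop (𝓝 ‖E / D‖) := (he.div hd hD).norm
  have h1 : ‖E / D‖ < 1 := by
    rw [norm_div, div_lt_one (norm_pos_iff.2 hD)]
    exact hED
  obtain ⟨r, hr, hr1⟩ := exists_between h1
  refine summable_of_ratio_norm_eventually_le hr1 ?_
  filter_upwards [hlim.eventually (gt_mem_nhds hr), hd.eventually_ne hD] with m hm hdm
  have : u (m + 1) = (e m / d m) * u m := by
    field_simp
    rw [h m]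
    ring
  rw [this, norm_mul]
  exact mul_le_mul_of_nonneg_right hm.le (norm_nonneg _)

/-- The moment of order `k ≤ n` converges absolutely: the ratio of consecutive terms tends to
`t q^k` at `+∞`, and the inverse ratio to `q^(n-k) / (t ∏ a_j ∏ b_j)` at `-∞`. -/
lemma mgMoment_summable {n : ℕ} {q t : ℂ} (hq : ‖q‖ < 1) (hq0 : q ≠ 0) (ht0 : t ≠ 0)
    (a b : Fin n → ℂ) (y : ℂ) (hy0 : y ≠ 0) (hy : ∀ j (m : ℤ), 1 - b j * (y * q ^ m) ≠ 0)
    (ha : ∀ i, a i ≠ 0) (hb : ∀ i, b i ≠ 0)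
    (hlow : ‖(∏ i, a i)⁻¹ * (∏ i, b i)⁻¹‖ < ‖t‖) (hupp : ‖t‖ < 1) (k : ℕ) (hk : k ≤ n) :
    Summable (mgMoment q t a b y k) := by
  have hrec := mgMoment_shift hq hq0 ht0 a b y hy k
  have hpow : Tendsto (fun m : ℕ => q ^ m) atTop (𝓝 0) :=
    tendsto_pow_atTop_nhds_zero_of_norm_lt_one hq
  have hqk : ‖q ^ k‖ ≤ 1 := by
    rw [norm_pow]; exact pow_le_one₀ (norm_nonneg _) hq.le
  refine Summable.of_nat_of_neg_add_one ?_ ?_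
  · refine summable_of_ratio (D := ∏ j : Fin n, (1 - q * (a j)⁻¹ * (y * 0)))
      (E := t * q ^ k * ∏ j, (1 - b j * (y * 0))) 
      (d := fun m => ∏ j, (1 - q * (a j)⁻¹ * (y * q ^ m)))
      (e := fun m => t * q ^ k * ∏ j, (1 - b j * (y * q ^ m))) (fun m => ?_) ?_ ?_ ?_
    · simpa using hrec m
    · exact tendsto_finsetProd _ fun j _ => ((hpow.const_mul y).const_mul _).const_sub 1
    · exact (tendsto_finsetProd _ fun j _ =>
        ((hpow.const_mul y).const_mul _).const_sub 1).const_mul _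
    · simp only [mul_zero, sub_zero, Finset.prod_const_one, mul_one, norm_mul, norm_one]
      exact (mul_le_of_le_one_right (norm_nonneg _) hqk).trans_lt hupp
  -- Towards `-∞` each linear factor `1 - c z` is multiplied by `q ^ (m + 2) = y / z`, so that it
  -- tends to `-c y`.
  · refine summable_of_ratio (E := ∏ j : Fin n, (0 - q * (a j)⁻¹ * y))
      (D := t * q ^ k * ∏ j, (0 - b j * y)) 
      (d := fun m => t * q ^ k * ∏ j, (q ^ (m + 2) - b j * y))
      (e := fun m => ∏ j, (q ^ (m + 2) - q * (a j)⁻¹ * y)) (fun m => ?_) ?_ ?_ ?_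
    · have h := hrec (-((m + 1 : ℕ) + 1))
      have e1 : ∀ c : ℂ, q ^ (m + 2) - c * y =
          q ^ (m + 2) * (1 - c * (y * q ^ (-((m + 1 : ℕ) + 1) : ℤ))) := fun c => by
        have : q ^ (m + 2) * q ^ (-((m + 1 : ℕ) + 1) : ℤ) = 1 := by
          rw [← zpow_natCast, ← zpow_add₀ hq0]
          push_cast
          ring_nf
          simp
        linear_combination c * y * this
      simp only [e1, Finset.prod_mul_distrib]
      rw [show (-((m + 1 : ℕ) + 1) + 1 : ℤ) = -((m : ℤ) + 1) by push_cast; ring] at h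
      linear_combination -(∏ i : Fin n, q ^ (m + 2)) * h
    · exact (tendsto_finsetProd _ fun j _ =>
        (((tendsto_add_atTop_iff_nat 2).2 hpow).sub_const _)).const_mul _
    · exact tendsto_finsetProd _ fun j _ =>
        (((tendsto_add_atTop_iff_nat 2).2 hpow).sub_const _)
    · have hA : ∏ i, a i ≠ 0 := Finset.prod_ne_zero_iff.2 fun i _ => ha i
      have hB : ∏ i, b i ≠ 0 := Finset.prod_ne_zero_iff.2 fun i _ => hb i
      have e2 : ∏ j : Fin n, (0 - q * (a j)⁻¹ * y) = (-y) ^ n * q ^ n * (∏ i, a i)⁻¹ := by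
        rw [← Finset.prod_inv_distrib, ← mul_pow, ← Fin.prod_const, ← Finset.prod_mul_distrib]
        exact Finset.prod_congr rfl fun j _ => by ring
      have e3 : ∏ j : Fin n, (0 - b j * y) = (-y) ^ n * ∏ i, b i := by
        rw [← Fin.prod_const, ← Finset.prod_mul_distrib]
        exact Finset.prod_congr rfl fun j _ => by ring
      rw [e2, e3]
      have hqn : ‖q ^ n‖ ≤ ‖q ^ k‖ := by
        rw [norm_pow, norm_pow]; exact pow_le_pow_of_le_one (norm_nonneg _) hq.le hk
      have hyn : 0 < ‖(-y) ^ n‖ := norm_pos_iff.2 (pow_ne_zero _ (neg_ne_zero.2 hy0))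
      have hBn : 0 < ‖∏ i, b i‖ := norm_pos_iff.2 hB
      have hqk0 : 0 < ‖q ^ k‖ := norm_pos_iff.2 (pow_ne_zero _ hq0)
      rw [norm_mul, norm_inv (∏ i, b i), ← div_eq_mul_inv, div_lt_iff₀ hBn] at hlow
      rw [norm_mul, norm_mul, norm_mul, norm_mul, norm_mul]
      calc ‖(-y) ^ n‖ * ‖q ^ n‖ * ‖(∏ i, a i)⁻¹‖
          ≤ ‖(-y) ^ n‖ * ‖q ^ k‖ * ‖(∏ i, a i)⁻¹‖ := by gcongr
        _ < ‖(-y) ^ n‖ * ‖q ^ k‖ * (‖t‖ * ‖∏ i, b i‖) := by gcongr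
        _ = _ := by ring

/-! ### The linear relation between the moments -/

/-- The polynomial `∏ (1 - z/a_j) - t ∏ (1 - b_j z)`, whose weighted sum over the lattice
vanishes. -/
noncomputable def mgPoly {n : ℕ} (t : ℂ) (a b : Fin n → ℂ) : Polynomial ℂ :=
  ∏ j, (1 - Polynomial.C (a j)⁻¹ * Polynomial.X) -
    Polynomial.C t * ∏ j, (1 - Polynomial.C (b j) * Polynomial.X)

lemma natDegree_one_sub (c : ℂ) :
    (1 - Polynomial.C c * Polynomial.X : Polynomial ℂ).natDegree ≤ 1 := by
  compute_degree

lemma natDegree_prod_one_sub {n : ℕ} (c : Fin n → ℂ) :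
    (∏ j, (1 - Polynomial.C (c j) * Polynomial.X) : Polynomial ℂ).natDegree ≤ n := by
  refine (Polynomial.natDegree_prod_le _ _).trans ?_
  exact (Finset.sum_le_sum fun j _ => natDegree_one_sub (c j)).trans (by simp)

lemma coeff_prod_one_sub {n : ℕ} (c : Fin n → ℂ) :
    (∏ j, (1 - Polynomial.C (c j) * Polynomial.X) : Polynomial ℂ).coeff n =
      (-1) ^ n * ∏ j, c j := by
  have h := Polynomial.coeff_prod_of_natDegree_le (s := Finset.univ)
    (fun j => (1 - Polynomial.C (c j) * Polynomial.X : Polynomial ℂ)) 1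
    fun j _ => natDegree_one_sub (c j)
  simp only [Finset.card_univ, Fintype.card_fin, mul_one] at h
  rw [h, ← Fin.prod_const, ← Finset.prod_mul_distrib]
  exact Finset.prod_congr rfl fun j _ => by simp [Polynomial.coeff_one]

lemma mgPoly_natDegree {n : ℕ} (t : ℂ) (a b : Fin n → ℂ) : (mgPoly t a b).natDegree ≤ n := by
  refine (Polynomial.natDegree_sub_le _ _).trans (max_le (natDegree_prod_one_sub _) ?_)
  exact (Polynomial.natDegree_C_mul_le _ _).trans (natDegree_prod_one_sub _)

lemma mgPoly_coeff_zero {n : ℕ} (t : ℂ) (a b : Fin n → ℂ) : (mgPoly t a b).coeff 0 = 1 - t := by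
  rw [Polynomial.coeff_zero_eq_eval_zero]
  simp [mgPoly, Polynomial.eval_prod]

lemma mgPoly_coeff_top {n : ℕ} (t : ℂ) (a b : Fin n → ℂ) :
    (mgPoly t a b).coeff n = (-1) ^ n * ((∏ j, a j)⁻¹ - t * ∏ j, b j) := by
  rw [mgPoly, Polynomial.coeff_sub, Polynomial.coeff_C_mul, coeff_prod_one_sub,
    coeff_prod_one_sub, Finset.prod_inv_distrib]
  ring

/-- The linear relation between the moments of order `0, …, n`: the sums of the weight against
`∏ (1 - z/a_j)` and against `t ∏ (1 - b_j z)` agree, by translating the lattice by one step. -/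
lemma mgMoment_relation {n : ℕ} {q t : ℂ} (hq : ‖q‖ < 1) (hq0 : q ≠ 0) (ht0 : t ≠ 0)
    (a b : Fin n → ℂ) (y : ℂ) (hy : ∀ j (m : ℤ), 1 - b j * (y * q ^ m) ≠ 0)
    (hs : ∀ k ≤ n, Summable (mgMoment q t a b y k)) :
    ∑ k ∈ Finset.range (n + 1), (mgPoly t a b).coeff k * ∑' m, mgMoment q t a b y k m = 0 := by
  have key : ∀ P : Polynomial ℂ, P.natDegree ≤ n →
      HasSum (fun m : ℤ => mgMoment q t a b y 0 m * P.eval (y * q ^ m))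
        (∑ k ∈ Finset.range (n + 1), P.coeff k * ∑' m, mgMoment q t a b y k m) := by
    intro P hP
    have : ∀ m : ℤ, mgMoment q t a b y 0 m * P.eval (y * q ^ m) =
        ∑ k ∈ Finset.range (n + 1), P.coeff k * mgMoment q t a b y k m := by
      intro m
      rw [Polynomial.eval_eq_sum_range' (Nat.lt_succ_of_le hP), Finset.mul_sum]
      refine Finset.sum_congr rfl fun k _ => ?_
      simp only [mgMoment, pow_zero]
      ring
    simp only [this]
    exact hasSum_sum fun k hk =>
      (hs k (Nat.lt_succ_iff.1 (Finset.mem_range.1 hk))).hasSum.mul_left _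
  have h1 := key (∏ j, (1 - Polynomial.C (a j)⁻¹ * Polynomial.X)) (natDegree_prod_one_sub _)
  have h2 := key (Polynomial.C t * ∏ j, (1 - Polynomial.C (b j) * Polynomial.X))
    ((Polynomial.natDegree_C_mul_le _ _).trans (natDegree_prod_one_sub _))
  have h1' := (Equiv.addRight (1 : ℤ)).hasSum_iff.2 h1
  have e : ((fun m : ℤ => mgMoment q t a b y 0 m *
        (∏ j, (1 - Polynomial.C (a j)⁻¹ * Polynomial.X)).eval (y * q ^ m)) ∘
        (Equiv.addRight (1 : ℤ))) =
      fun m : ℤ => mgMoment q t a b y 0 m *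
        (Polynomial.C t * ∏ j, (1 - Polynomial.C (b j) * Polynomial.X)).eval (y * q ^ m) := by
    funext m
    have h := mgMoment_shift hq hq0 ht0 a b y hy 0 m
    simp only [pow_zero, mul_one] at h
    simp only [Function.comp, Equiv.coe_addRight, Polynomial.eval_mul, Polynomial.eval_prod,
      Polynomial.eval_sub, Polynomial.eval_one, Polynomial.eval_C, Polynomial.eval_X]
    rw [← h, zpow_add_one₀ hq0]
    congr 1
    exact Finset.prod_congr rfl fun j _ => by ring
  rw [e] at h1'
  have := h1'.unique h2
  simp only [mgPoly, Polynomial.coeff_sub, sub_mul, Finset.sum_sub_distrib]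
  exact sub_eq_zero.2 this

/-! ### Determinants of moments -/

/-- Fubini: a product of absolutely convergent sums is the sum over the product lattice. -/
lemma hasSum_pi_prod {n : ℕ} (F : Fin n → ℤ → ℂ) (hF : ∀ i, Summable (F i)) :
    HasSum (fun ν : Fin n → ℤ => ∏ i, F i (ν i)) (∏ i, ∑' m, F i m) := by
  induction n with
  | zero => exact hasSum_unique (fun ν : Fin 0 → ℤ => ∏ i, F i (ν i))
  | succ n ih =>
    have ih' := ih (fun i : Fin n => F i.succ) fun i => hF i.succ
    rw [← (Fin.consEquiv fun _ : Fin (n + 1) => ℤ).hasSum_iff, Fin.prod_univ_succ]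
    have hsum : Summable fun p : ℤ × (Fin n → ℤ) => F 0 p.1 * ∏ i : Fin n, F i.succ (p.2 i) :=
      summable_mul_of_summable_norm (f := F 0)
        (g := fun ν : Fin n → ℤ => ∏ i : Fin n, F i.succ (ν i)) (hF 0).norm ih'.summable.norm
    have h := (hF 0).hasSum.mul ih' hsum
    have e : (fun ν : Fin (n + 1) → ℤ => ∏ i, F i (ν i)) ∘
        (Fin.consEquiv fun _ : Fin (n + 1) => ℤ) =
        fun p : ℤ × (Fin n → ℤ) => F 0 p.1 * ∏ i : Fin n, F i.succ (p.2 i) := by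
      funext p
      simp [Fin.prod_univ_succ, Fin.consEquiv]
    rw [e]
    exact h

/-- A multiple series of determinants whose `i`-th row depends on `ν i` only is summed row by
row. -/
lemma hasSum_det {n : ℕ} (M : Fin n → Fin n → ℤ → ℂ) (hM : ∀ i j, Summable (M i j)) :
    HasSum (fun ν : Fin n → ℤ => Matrix.det (Matrix.of fun i j => M i j (ν i)))
      (Matrix.det (Matrix.of fun i j => ∑' m, M i j m)) := by
  have hdet : ∀ K : Fin n → Fin n → ℂ, Matrix.det (Matrix.of K) =
      ∑ σ : Equiv.Perm (Fin n), ((Equiv.Perm.sign σ : ℤ) : ℂ) * ∏ i, K i (σ i) := by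
    intro K
    rw [← Matrix.det_transpose, Matrix.det_apply']
    rfl
  simp only [hdet]
  exact hasSum_sum fun σ _ =>
    (hasSum_pi_prod (fun i => M i (σ i)) fun i => hM i (σ i)).mul_left _

/-- A linear relation `∑_{k ≤ m+1} c_k S_k = 0` between `m + 2` columns relates the determinants
on the first and on the last `m + 1` of them: substitute it into the column `S_0` and move the
surviving column `S_{m+1}` to the end, a cyclic permutation of sign `(-1)^m`. -/
lemma det_relation {m : ℕ} (S : Fin (m + 1) → ℕ → ℂ) (c : ℕ → ℂ)
    (h : ∀ i, ∑ k ∈ Finset.range (m + 2), c k * S i k = 0) :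
    c 0 * Matrix.det (Matrix.of fun i j : Fin (m + 1) => S i j) =
      (-1) ^ (m + 1) * c (m + 1) *
        Matrix.det (Matrix.of fun i j : Fin (m + 1) => S i (j + 1)) := by
  set A : Matrix (Fin (m + 1)) (Fin (m + 1)) ℂ := Matrix.of fun i j => S i j with hA
  set N : Matrix (Fin (m + 1)) (Fin (m + 1)) ℂ := Matrix.of fun i j => S i (j + 1) with hN
  have h1 := Matrix.det_updateCol_sum A 0 (fun k => c k)
  have h2 : (fun k => ∑ i : Fin (m + 1), c i • A k i) = (-c (m + 1)) • fun k => S k (m + 1) := by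
    funext k
    have := h k
    rw [Finset.sum_range_succ, ← Fin.sum_univ_eq_sum_range (fun j => c j * S k j)] at this
    simp only [hA, Matrix.of_apply, smul_eq_mul, Pi.smul_apply]
    linear_combination this
  have h3 : A.updateCol 0 (fun k => S k (m + 1)) = N.submatrix id (finRotate (m + 1)).symm := by
    ext i j
    obtain ⟨j, rfl⟩ := (finRotate (m + 1)).surjective j
    refine Fin.lastCases ?_ (fun j => ?_) j
    · simp [hN]
    · rw [Matrix.submatrix_apply, Equiv.symm_apply_apply, finRotate_apply,
        Fin.coeSucc_eq_succ, Matrix.updateCol_ne (Fin.succ_ne_zero j)]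
      simp [hA, hN]
  rw [h2, Matrix.det_updateCol_smul, h3, Matrix.det_permute'] at h1
  simp only [Equiv.Perm.sign_symm, sign_finRotate, Units.val_pow_eq_pow_val, Units.val_neg,
    Units.val_one, Int.cast_pow, Int.cast_neg, Int.cast_one, Fin.val_zero, smul_eq_mul,
    Nat.add_sub_cancel] at h1
  rw [← h1]
  ring

/-- The product of differences is a Vandermonde determinant; the weights are absorbed into its
rows. -/
lemma mgTerm_eq_det {n : ℕ} (q t : ℂ) (ht0 : t ≠ 0) (a b x : Fin n → ℂ) (ν : Fin n → ℤ) :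
    mgTerm q t a b x ν =
      Matrix.det (Matrix.of fun i j : Fin n => mgMoment q t a b (x i) j (ν i)) := by
  have h := Matrix.det_mul_column (fun i => t ^ ν i * mgWeight q a b (x i * q ^ ν i))
    (Matrix.vandermonde fun i => x i * q ^ ν i)
  rw [Matrix.det_vandermonde, Finset.prod_mul_distrib] at h
  have ht : ∏ i, t ^ ν i = t ^ ∑ i, ν i := by
    induction (Finset.univ : Finset (Fin n)) using Finset.induction_on with
    | empty => simp
    | insert i s hi ih => rw [Finset.prod_insert hi, Finset.sum_insert hi, zpow_add₀ ht0, ih]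
  rw [ht] at h
  exact h.symm

/-- Replacing `t` by `q t` multiplies the weight of each variable by `z`, up to the constant `x i`,
hence raises the order of every moment by one. -/
lemma mgTerm_shift_eq_det {n : ℕ} (q t : ℂ) (hq0 : q ≠ 0) (ht0 : t ≠ 0) (a b x : Fin n → ℂ)
    (ν : Fin n → ℤ) :
    (∏ i, x i) * mgTerm q (q * t) a b x ν =
      Matrix.det (Matrix.of fun i j : Fin n => mgMoment q t a b (x i) (j + 1) (ν i)) := by
  rw [mgTerm_eq_det q (q * t) (mul_ne_zero hq0 ht0), ← Matrix.det_mul_column]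
  congr 1
  ext i j
  simp only [Matrix.of_apply, mgMoment, mul_zpow]
  ring

/-- Recurrence in the exponent parameter for the Milne–Gustafson sum. -/
theorem milne_gustafson_recurrence
    (q : ℝ) (hq0 : 0 < q) (hq1 : q < 1) (n : ℕ) (hn : 1 ≤ n)
    (a b : Fin n → ℂ) (ha : ∀ i, a i ≠ 0) (hb : ∀ i, b i ≠ 0)
    (t : ℂ) (ht0 : t ≠ 0)
    (x : Fin n → ℂ) (hx : ∀ i, x i ≠ 0)
    (hlow : ‖(∏ i, a i)⁻¹ * (∏ i, b i)⁻¹‖ < ‖t‖) (hupp : ‖t‖ < 1)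
    (hxb : ∀ i j, ∀ m : ℤ, x i * b j ≠ (q : ℂ) ^ m) :
    mgSum (q : ℂ) t a b x =
      (1 - t * (∏ i, a i) * ∏ i, b i) / ((∏ i, a i) * (1 - t)) *
        (∏ i, x i) * mgSum (q : ℂ) ((q : ℂ) * t) a b x := by
  obtain ⟨m, rfl⟩ : ∃ m, n = m + 1 := ⟨n - 1, by omega⟩
  have hq : ‖(q : ℂ)‖ < 1 := by
    rw [Complex.norm_real, Real.norm_of_nonneg hq0.le]
    exact hq1
  have hqc : (q : ℂ) ≠ 0 := by exact_mod_cast hq0.ne'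
  have hy : ∀ i j (l : ℤ), 1 - b j * (x i * (q : ℂ) ^ l) ≠ 0 := by
    intro i j l h
    apply hxb i j (-l)
    rw [zpow_neg]
    refine eq_inv_of_mul_eq_one_left ?_
    linear_combination -h
  have hs : ∀ i, ∀ k ≤ m + 1, Summable (mgMoment (q : ℂ) t a b (x i) k) := fun i k hk =>
    mgMoment_summable hq hqc ht0 a b (x i) (hx i) (hy i) ha hb hlow hupp k hk
  have hS0 := hasSum_det (fun i j : Fin (m + 1) => mgMoment (q : ℂ) t a b (x i) j)
    fun i j => hs i j (by omega)
  have hS1 := hasSum_det (fun i j : Fin (m + 1) => mgMoment (q : ℂ) t a b (x i) (j + 1))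
    fun i j => hs i (j + 1) (by omega)
  simp only [← mgTerm_eq_det (q : ℂ) t ht0] at hS0
  simp only [← mgTerm_shift_eq_det (q : ℂ) t hqc ht0] at hS1
  have h0 := hS0.tsum_eq
  have h1 := hS1.tsum_eq
  rw [tsum_mul_left] at h1
  have hrel := det_relation (fun i k => ∑' l, mgMoment (q : ℂ) t a b (x i) k l)
    (fun k => (mgPoly t a b).coeff k)
    fun i => mgMoment_relation hq hqc ht0 a b (x i) (hy i) (hs i)
  rw [← h0, ← h1, mgPoly_coeff_zero, mgPoly_coeff_top, ← mul_assoc ((-1 : ℂ) ^ (m + 1)),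
    ← mul_pow] at hrel
  norm_num at hrel
  have hA : ∏ i, a i ≠ 0 := Finset.prod_ne_zero_iff.2 fun i _ => ha i
  have ht1 : 1 - t ≠ 0 := by
    intro h
    rw [← sub_eq_zero.1 h] at hupp
    simp at hupp
  unfold mgSum
  rw [← mul_right_inj' ht1]
  field_simp
  field_simp at hrel
  linear_combination (1 - (q : ℂ)) ^ (m + 1) * hrel
end

section
/- Let a = (a_1,…,a_n) and suppose a_i b_j ∉ q^{−ℕ} for all 1 ≤ i, j ≤ n, and 0 < |t| < 1. Then for every N ∈ ℕ the series defining I(q^N t; a) converges absolutely (its summand vanishes for ν outside ℕⁿ, since (q^{1+ν_i})_∞ = 0 when ν_i < 0), and lim_{N→∞} I(q^N t; a) = (1−q)ⁿ · ∏_{1≤i<j≤n} (a_j − a_i) · ∏_{i=1}^n ∏_{j=1}^n (q a_i a_j⁻¹)_∞ / (a_i b_j)_∞. (Asymptotic behavior of the truncated Milne–Gustafson sum.) -/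
/-!
With `x = a`, the diagonal numerator factors `(q ^ (1 + ν i))_∞` kill every summand outside `ℕⁿ`
(`mgCoeff_eq_zero`). On `ℕⁿ` the summand is `t ^ (∑ ν)` times a coefficient independent of `t`,
and that coefficient is bounded (`exists_mgCoeff_bound`): the Vandermonde factor obviously is, and
each ratio of q-Pochhammer symbols converges to `1` as `ν i → ∞`, since `(z)_∞ → 1` as `z → 0`.
Hence for `‖s‖ ≤ ‖t‖ < 1` the series of `I(s; a)` is dominated by a constant times a product of
`n` geometric series (`norm_mgTerm_le`). Replacing `t` by `q ^ N * t` and letting `N → ∞`, every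
term with `ν ≠ 0` tends to `0`, and dominated convergence leaves the `ν = 0` term, which is the
stated limit.
-/

open scoped BigOperators
open Finset

open Filter Topology

/-- Summability of a product function on `Fin n → ℤ`, one copy of `g` per coordinate. -/
lemma summable_prod_coord {g : ℤ → ℝ} (hg : Summable g) (hg0 : ∀ m, 0 ≤ g m) (n : ℕ) :
    Summable fun ν : Fin n → ℤ => ∏ i, g (ν i) := by
  induction n with
  | zero => exact Summable.of_finite
  | succ n ih =>
    rw [← (Fin.consEquiv fun _ : Fin (n + 1) => ℤ).summable_iff]
    refine (hg.mul_of_nonneg ih hg0 fun ν => Finset.prod_nonneg fun i _ => hg0 _).congr fun p => ?_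
    simp [Fin.consEquiv, Fin.prod_univ_succ]

/-- The one-variable majorant: a geometric sequence on `ℕ`, extended by zero to `ℤ`. -/
noncomputable def geomBound (r : ℝ) (m : ℤ) : ℝ := if 0 ≤ m then r ^ m else 0

lemma geomBound_nonneg {r : ℝ} (hr : 0 ≤ r) (m : ℤ) : 0 ≤ geomBound r m := by
  unfold geomBound
  split_ifs
  · exact zpow_nonneg hr m
  · exact le_rfl

lemma summable_geomBound {r : ℝ} (hr0 : 0 ≤ r) (hr1 : r < 1) : Summable (geomBound r) := by
  refine Summable.of_nat_of_neg_add_one ?_ ?_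
  · simpa [geomBound] using summable_geometric_of_lt_one hr0 hr1
  · refine summable_zero.congr fun m => ?_
    have : ¬ (0 : ℤ) ≤ -(m + 1 : ℤ) := by omega
    simp only [geomBound, if_neg this]

lemma tendsto_qp {q : ℝ} (hq0 : 0 < q) (hq1 : q < 1) (c : ℂ) :
    Tendsto (fun m : ℕ => qp (q : ℂ) (c * (q : ℂ) ^ m)) atTop (𝓝 1) := by
  have hqn : ‖(q : ℂ)‖ = q := by simp [abs_of_pos hq0]
  have hqm : Tendsto (fun m : ℕ => (q : ℂ) ^ m) atTop (𝓝 0) :=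
    tendsto_pow_atTop_nhds_zero_of_norm_lt_one (by rwa [hqn])
  have hsum : Summable fun i : ℕ => q ^ i * ‖c‖ :=
    (summable_geometric_of_lt_one hq0.le hq1).mul_right _
  have key := tendsto_tprod_one_add_of_dominated_convergence (𝓕 := atTop)
    (f := fun (m : ℕ) (i : ℕ) => -((q : ℂ) ^ i * (c * (q : ℂ) ^ m))) (g := fun _ => 0) hsum
    (fun i => by simpa using ((hqm.const_mul c).const_mul ((q : ℂ) ^ i)).neg)
    (Eventually.of_forall fun m i => by
      rw [norm_neg, norm_mul, norm_mul, norm_pow, norm_pow, hqn]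
      have : q ^ m ≤ 1 := pow_le_one₀ hq0.le hq1.le
      gcongr
      exact mul_le_of_le_one_right (norm_nonneg c) this)
  simpa [qp, sub_eq_add_neg] using key

/-- Along the lattice `qᵐ`, `m ≥ 0`, a ratio of q-Pochhammer symbols converges to `1`, so it is
bounded. A vanishing denominator costs nothing: the quotient is then `0`, and this happens only
finitely often. -/
lemma exists_ratio_bound {q : ℝ} (hq0 : 0 < q) (hq1 : q < 1) (c d : ℂ) :
    ∃ C : ℝ, ∀ m : ℕ, ‖qp (q : ℂ) (c * (q : ℂ) ^ m) / qp (q : ℂ) (d * (q : ℂ) ^ m)‖ ≤ C := by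
  have h := ((tendsto_qp hq0 hq1 c).div (tendsto_qp hq0 hq1 d) one_ne_zero).norm
  obtain ⟨C, hC⟩ := h.bddAbove_range
  exact ⟨C, fun m => hC ⟨m, rfl⟩⟩

/-- The summand of the truncated Jackson integral without the factor `t ^ ∑ ν`. -/
noncomputable def mgCoeff {n : ℕ} (q : ℂ) (a b : Fin n → ℂ) (ν : Fin n → ℤ) : ℂ :=
  (∏ i, ∏ j, qp q (q * (a j)⁻¹ * (a i * q ^ ν i)) / qp q (b j * (a i * q ^ ν i))) *
    ∏ i, ∏ j ∈ Finset.Ioi i, (a j * q ^ ν j - a i * q ^ ν i)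

lemma mgTerm_eq {n : ℕ} (q t : ℂ) (a b : Fin n → ℂ) (ν : Fin n → ℤ) :
    mgTerm q t a b a ν = t ^ (∑ i, ν i) * mgCoeff q a b ν := by
  rw [mgTerm, mgCoeff, mul_assoc]

/-- Truncation: the diagonal numerator `(q ^ (1 + ν i))_∞` vanishes when `ν i < 0`. -/
lemma mgCoeff_eq_zero {n : ℕ} {q : ℂ} (hq : q ≠ 0) {a b : Fin n → ℂ} (ha : ∀ i, a i ≠ 0)
    {ν : Fin n → ℤ} {i : Fin n} (hi : ν i < 0) : mgCoeff q a b ν = 0 := by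
  have h : qp q (q * (a i)⁻¹ * (a i * q ^ ν i)) = 0 := by
    refine tprod_of_exists_eq_zero ⟨(-ν i - 1).toNat, ?_⟩
    have hz : q ^ (-ν i - 1).toNat = q ^ (-ν i - 1) := by
      rw [← zpow_natCast, Int.toNat_of_nonneg (by omega)]
    have h1 : q ^ (-ν i - 1) * q * q ^ ν i = 1 := by
      rw [← zpow_add_one₀ hq, ← zpow_add₀ hq]; simp
    have h2 : (a i)⁻¹ * a i = 1 := inv_mul_cancel₀ (ha i)
    rw [hz]
    linear_combination (-(a i)⁻¹ * a i) * h1 - h2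
  rw [mgCoeff, Finset.prod_eq_zero (Finset.mem_univ i), zero_mul]
  exact Finset.prod_eq_zero (Finset.mem_univ i) (by rw [h, zero_div])

lemma exists_mgCoeff_bound {n : ℕ} {q : ℝ} (hq0 : 0 < q) (hq1 : q < 1) (a b : Fin n → ℂ) :
    ∃ C : ℝ, ∀ ν : Fin n → ℤ, (∀ i, 0 ≤ ν i) → ‖mgCoeff (q : ℂ) a b ν‖ ≤ C := by
  choose K hK using fun i j => exists_ratio_bound hq0 hq1 ((q : ℂ) * (a j)⁻¹ * a i) (b j * a i)
  have hpow : ∀ m : ℕ, ‖(q : ℂ) ^ m‖ ≤ 1 := fun m => by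
    rw [norm_pow, Complex.norm_real, Real.norm_of_nonneg hq0.le]
    exact pow_le_one₀ hq0.le hq1.le
  have hterm : ∀ (i : Fin n) (m : ℕ), ‖a i * (q : ℂ) ^ m‖ ≤ ‖a i‖ := fun i m => by
    rw [norm_mul]
    exact mul_le_of_le_one_right (norm_nonneg _) (hpow m)
  refine ⟨(∏ i, ∏ j, K i j) * ∏ i, ∏ j ∈ Finset.Ioi i, (‖a j‖ + ‖a i‖), fun ν hν => ?_⟩
  lift ν to Fin n → ℕ using hν
  simp only [mgCoeff, zpow_natCast, norm_mul, norm_prod]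
  have hK0 : ∀ i j, 0 ≤ K i j := fun i j => (norm_nonneg _).trans (hK i j 0)
  refine mul_le_mul ?_ ?_ (by positivity) ?_
  · refine Finset.prod_le_prod (fun i _ => by positivity) fun i _ =>
      Finset.prod_le_prod (fun j _ => by positivity) fun j _ => ?_
    simpa only [mul_assoc] using hK i j (ν i)
  · refine Finset.prod_le_prod (fun i _ => by positivity) fun i _ =>
      Finset.prod_le_prod (fun j _ => by positivity) fun j _ => ?_
    exact (norm_sub_le _ _).trans (add_le_add (hterm j _) (hterm i _))
  · exact Finset.prod_nonneg fun i _ => Finset.prod_nonneg fun j _ => hK0 i j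

/-- Domination of the summands of `I(s; a)`, uniformly in `‖s‖ ≤ r`. -/
lemma norm_mgTerm_le_s2 {n : ℕ} {q : ℝ} (hq0 : 0 < q) {a b : Fin n → ℂ} (ha : ∀ i, a i ≠ 0)
    {C : ℝ} (hC : ∀ ν : Fin n → ℤ, (∀ i, 0 ≤ ν i) → ‖mgCoeff (q : ℂ) a b ν‖ ≤ C)
    {r : ℝ} {s : ℂ} (hs : ‖s‖ ≤ r) (ν : Fin n → ℤ) :
    ‖mgTerm (q : ℂ) s a b a ν‖ ≤ (∏ i, geomBound r (ν i)) * C := by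
  rw [mgTerm_eq]
  by_cases hν : ∀ i, 0 ≤ ν i
  · have hC' := hC ν hν
    lift ν to Fin n → ℕ using hν
    simp only [geomBound, Int.natCast_nonneg, if_true, zpow_natCast]
    rw [norm_mul, Finset.prod_pow_eq_pow_sum, ← Nat.cast_sum, zpow_natCast, norm_pow]
    have : 0 ≤ r := (norm_nonneg _).trans hs
    gcongr
  · push Not at hν
    obtain ⟨i, hi⟩ := hν
    rw [mgCoeff_eq_zero (by exact_mod_cast hq0.ne') ha hi,
      Finset.prod_eq_zero (Finset.mem_univ i) (by simp [geomBound, hi])]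
    simp

/-- Only `ν = 0` survives as `s → 0`: on `ℕⁿ` every other term carries a positive power of `s`. -/
lemma tendsto_mgTerm {n : ℕ} {q : ℝ} (hq0 : 0 < q) {a b : Fin n → ℂ} (ha : ∀ i, a i ≠ 0)
    {s : ℕ → ℂ} (hs : Tendsto s atTop (𝓝 0)) (ν : Fin n → ℤ) :
    Tendsto (fun N => mgTerm (q : ℂ) (s N) a b a ν) atTop
      (𝓝 (if ν = 0 then mgCoeff (q : ℂ) a b 0 else 0)) := by
  simp only [mgTerm_eq]
  split_ifs with h0
  · simp [h0]
  by_cases hν : ∀ i, 0 ≤ ν i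
  · lift ν to Fin n → ℕ using hν
    have hne : ∑ i, ν i ≠ 0 := by
      intro h
      apply h0
      ext i
      simpa using (Finset.sum_eq_zero_iff.mp h) i (Finset.mem_univ i)
    simp only [← Nat.cast_sum, zpow_natCast]
    simpa [hne] using (hs.pow (∑ i, ν i)).mul_const (mgCoeff (q : ℂ) a b fun i => (ν i : ℤ))
  · push Not at hν
    obtain ⟨i, hi⟩ := hν
    simp [mgCoeff_eq_zero (show (q : ℂ) ≠ 0 by exact_mod_cast hq0.ne') ha hi]

/-- Asymptotic behavior of the truncated Milne–Gustafson sum. -/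
theorem milne_gustafson_truncated_asymptotics
    (q : ℝ) (hq0 : 0 < q) (hq1 : q < 1) (n : ℕ) (hn : 1 ≤ n)
    (a b : Fin n → ℂ) (ha : ∀ i, a i ≠ 0) (hb : ∀ i, b i ≠ 0)
    (t : ℂ) (ht0 : t ≠ 0) (hupp : ‖t‖ < 1)
    (hab : ∀ i j, ∀ m : ℕ, a i * b j ≠ ((q : ℂ) ^ m)⁻¹) :
    (∀ N : ℕ, Summable (mgTerm (q : ℂ) ((q : ℂ) ^ N * t) a b a)) ∧
      Filter.Tendsto (fun N : ℕ => mgSum (q : ℂ) ((q : ℂ) ^ N * t) a b a) Filter.atTop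
        (nhds ((1 - (q : ℂ)) ^ n * (∏ i, ∏ j ∈ Finset.Ioi i, (a j - a i)) *
          ∏ i, ∏ j, qp (q : ℂ) ((q : ℂ) * a i * (a j)⁻¹) / qp (q : ℂ) (a i * b j))) := by
  obtain ⟨C, hC⟩ := exists_mgCoeff_bound hq0 hq1 a b
  have hqn : ‖(q : ℂ)‖ = q := by simp [abs_of_pos hq0]
  have hs : ∀ N : ℕ, ‖(q : ℂ) ^ N * t‖ ≤ ‖t‖ := fun N => by
    rw [norm_mul, norm_pow, hqn]
    exact mul_le_of_le_one_left (norm_nonneg t) (pow_le_one₀ hq0.le hq1.le)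
  have hsum : Summable fun ν : Fin n → ℤ => (∏ i, geomBound ‖t‖ (ν i)) * C :=
    (summable_prod_coord (summable_geomBound (norm_nonneg t) hupp)
      (geomBound_nonneg (norm_nonneg t)) n).mul_right C
  refine ⟨fun N => hsum.of_norm_bounded (norm_mgTerm_le_s2 hq0 ha hC (hs N)), ?_⟩
  have hs0 : Tendsto (fun N : ℕ => (q : ℂ) ^ N * t) atTop (𝓝 0) := by
    simpa using (tendsto_pow_atTop_nhds_zero_of_norm_lt_one (by rwa [hqn])).mul_const t
  have key := tendsto_tsum_of_dominated_convergence hsum (tendsto_mgTerm (b := b) hq0 ha hs0)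
    (Eventually.of_forall fun N => norm_mgTerm_le_s2 hq0 ha hC (hs N))
  rw [tsum_ite_eq] at key
  simp only [mgSum]
  convert key.const_mul ((1 - (q : ℂ)) ^ n) using 2
  rw [mul_assoc, mgCoeff, mul_comm (∏ i, ∏ j ∈ Finset.Ioi i, (a j - a i))]
  simp only [Pi.zero_apply, zpow_zero, mul_one]
  congr 2
  refine Finset.prod_congr rfl fun i _ => Finset.prod_congr rfl fun j _ => ?_
  rw [mul_right_comm, mul_comm (a i) (b j)]
end

section
/- Let a = (a_1,…,a_n) and suppose a_i b_j ∉ q^{−ℕ} for all 1 ≤ i, j ≤ n, and 0 < |t| < 1. Then the truncated Milne–Gustafson sum evaluates as I(t;a) = (1−q)ⁿ (q)_∞ⁿ (t a_1⋯a_n b_1⋯b_n)_∞ / [ (t)_∞ · ∏_{i=1}^n ∏_{j=1}^n (a_i b_j)_∞ ] · ∏_{1≤i<j≤n} a_j θ(a_i/a_j). (Multi-dimensional q-binomial theorem; Corollary 3.4 of the paper.) -/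
/-!
The idea is to show that `F(t) = ∑_ν t^|ν| g(ν)`, where `I(t;a) = (1 - q)^n F(t)`, satisfies the
q-difference equation `(1 - t) F(t) = (1 - t a₁⋯aₙ b₁⋯bₙ) F(qt)`; iterating it and letting the
argument tend to `0` determines `F(t)` from the single term `g(0)`.

Suppose first that no quotient `a_i / a_j` with `i ≠ j` is an integer power of `q`. Then the
coordinates `z_i = a_i q^{ν_i}` are pairwise distinct, and Lagrange interpolation gives
`∑_k ∏_j (1 - c_j z_k) ∏_{j≠k} z_j / (z_j - z_k) = 1 - ∏_j c_j z_j` (`sum_partial_fractions`).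
For `c_j = 1 / a_j` the right-hand side is `1 - q^|ν|`; for `c_j = b_j` it is
`1 - a₁⋯aₙ b₁⋯bₙ q^|ν|`. The `k`-th term of the first expansion at `ν + e_k`, multiplied by
`g(ν + e_k)`, equals the `k`-th term of the second at `ν`, multiplied by `g(ν)` (`core_shift`).
Summing over `ν` yields the q-difference equation (`total_qdiff`). Since `g` vanishes off the cone
`ν ≥ 0` and is bounded on it, all series converge absolutely, and dominated convergence gives
`F(q^m t) → g(0)` (`tendsto_total`). The value `g(0)` is computed in `core_zero`.

If `a_i = a_j q^m` for some `i ≠ j`, both sides vanish: the right-hand side because `θ(q^m) = 0`,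
the left-hand side because exchanging `z_i` and `z_j` is a bijection of the lattice that changes
the sign of the summand (`total_eq_zero`).
-/

open scoped BigOperators
open Finset

namespace MilneGustafson

open Filter Topology Polynomial

/-! ### The infinite q-Pochhammer symbol -/

variable {q : ℂ}

lemma summable_norm_factor (hq : ‖q‖ < 1) (x : ℂ) : Summable fun i : ℕ => ‖-(q ^ i * x)‖ := by
  simp only [norm_neg, norm_mul, norm_pow]
  exact (summable_geometric_of_lt_one (norm_nonneg _) hq).mul_right _

lemma multipliable_factor (hq : ‖q‖ < 1) (x : ℂ) :
    Multipliable fun i : ℕ => (1 - q ^ i * x) := by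
  simpa [sub_eq_add_neg] using multipliable_one_add_of_summable (summable_norm_factor hq x)

lemma qp_eq_mul (hq : ‖q‖ < 1) (x : ℂ) : qp q x = (1 - x) * qp q (q * x) := by
  have h : Multipliable fun i : ℕ => (1 - q ^ (i + 1) * x) := by
    simpa [pow_succ, mul_assoc] using multipliable_factor hq (q * x)
  have h2 := tprod_eq_zero_mul' (f := fun i : ℕ => 1 - q ^ i * x) h
  simp only [pow_zero, one_mul, pow_succ, mul_assoc] at h2
  exact h2

lemma qp_ne_zero (hq : ‖q‖ < 1) {x : ℂ} (h : ∀ i : ℕ, q ^ i * x ≠ 1) : qp q x ≠ 0 := by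
  have := tprod_one_add_ne_zero_of_summable (f := fun i : ℕ => -(q ^ i * x))
    (fun i => by rw [← sub_eq_add_neg]; exact sub_ne_zero.2 (h i).symm)
    (summable_norm_factor hq x)
  simpa [qp, sub_eq_add_neg] using this

lemma qp_eq_zero {x : ℂ} {i : ℕ} (h : q ^ i * x = 1) : qp q x = 0 :=
  tprod_of_exists_eq_zero ⟨i, by rw [h, sub_self]⟩

lemma qp_eq_prod_mul (hq : ‖q‖ < 1) (x : ℂ) (m : ℕ) :
    qp q x = (∏ k ∈ range m, (1 - q ^ k * x)) * qp q (q ^ m * x) := by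
  induction m with
  | zero => simp
  | succ m ih =>
    rw [ih, prod_range_succ, qp_eq_mul hq (q ^ m * x), pow_succ', mul_assoc, mul_assoc]

lemma tendsto_prod_qp (hq : ‖q‖ < 1) (x : ℂ) :
    Tendsto (fun m : ℕ => ∏ k ∈ range m, (1 - q ^ k * x)) atTop (𝓝 (qp q x)) :=
  (multipliable_factor hq x).tendsto_prod_tprod_nat

lemma tendsto_qp_pow (hq : ‖q‖ < 1) {x : ℂ} (h : qp q x ≠ 0) :
    Tendsto (fun m : ℕ => qp q (q ^ m * x)) atTop (𝓝 1) := by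
  have h1 : Tendsto (fun m : ℕ => qp q x / ∏ k ∈ range m, (1 - q ^ k * x)) atTop
      (𝓝 (qp q x / qp q x)) := tendsto_const_nhds.div (tendsto_prod_qp hq x) h
  rw [div_self h] at h1
  refine h1.congr fun m => ?_
  have h2 := qp_eq_prod_mul hq x m
  have h3 : ∏ k ∈ range m, (1 - q ^ k * x) ≠ 0 := fun h0 => h (by rw [h2, h0, zero_mul])
  rw [div_eq_iff h3, mul_comm]; exact h2

lemma zpow_ne_one (hq : ‖q‖ < 1) {m : ℤ} (hm : m ≠ 0) : q ^ m ≠ 1 := by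
  intro h
  have h1 : ‖q‖ ^ m = 1 := by rw [← norm_zpow, h, norm_one]
  exact hm ((zpow_eq_one_iff_right₀ (norm_nonneg q) hq.ne).1 h1)

lemma qp_zpow_eq_zero (hq0 : q ≠ 0) {m : ℤ} (hm : m ≤ 0) : qp q (q ^ m) = 0 := by
  obtain ⟨k, rfl⟩ := Int.exists_eq_neg_ofNat hm
  exact qp_eq_zero (i := k) (by simp [hq0])

lemma qp_self_ne_zero (hq0 : q ≠ 0) (hq : ‖q‖ < 1) : qp q q ≠ 0 := by
  refine qp_ne_zero hq fun i h => ?_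
  refine zpow_ne_one hq (m := (i : ℤ) + 1) (by omega) ?_
  rw [zpow_add₀ hq0]; simpa using h

lemma th_zpow (hq0 : q ≠ 0) (m : ℤ) : th q (q ^ m) = 0 := by
  rcases le_or_gt m 0 with h | h
  · rw [th, qp_zpow_eq_zero hq0 h, zero_mul]
  · have : q / q ^ m = q ^ (1 - m) := by rw [zpow_sub₀ hq0, zpow_one]
    rw [th, this, qp_zpow_eq_zero hq0 (m := 1 - m) (by omega), mul_zero]

/-! ### Partial fractions and the Vandermonde product -/

/-- Lagrange interpolation at the nodes `z k` of the polynomial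
`∏ (1 - b j X) - (∏ b j) ∏ (z j - X)`, which has degree less than `n`, evaluated at `0`. -/
lemma sum_partial_fractions {n : ℕ} (b z : Fin n → ℂ) (hb : ∀ i, b i ≠ 0)
    (hz : Function.Injective z) :
    ∑ k, (∏ j, (1 - b j * z k)) * ∏ j ∈ univ.erase k, z j / (z j - z k) =
      1 - ∏ j, b j * z j := by
  classical

  let A : ℂ[X] := ∏ j, (X - C (b j)⁻¹)
  let B : ℂ[X] := ∏ j, (X - C (z j))
  let c : ℂ := ∏ j, -b j
  have hA : A.Monic := Polynomial.monic_prod_of_monic _ _ fun j _ => monic_X_sub_C _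
  have hB : B.Monic := Polynomial.monic_prod_of_monic _ _ fun j _ => monic_X_sub_C _
  have dA : A.degree = n := by simp [A, degree_prod]
  have dB : B.degree = n := by simp [B, degree_prod]
  have hd : (C c * (A - B)).degree < #(univ : Finset (Fin n)) := by
    have hc : c ≠ 0 := prod_ne_zero_iff.2 fun j _ => neg_ne_zero.2 (hb j)
    rw [degree_C_mul hc]
    have := degree_sub_lt_left (dA.trans dB.symm) hA.ne_zero (by rw [hA, hB])
    rw [dA] at this
    simpa using this
  have ecA : ∀ x, c * A.eval x = ∏ j, (1 - b j * x) := by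
    intro x
    simp only [A, c, eval_prod, ← prod_mul_distrib]
    refine prod_congr rfl fun j _ => ?_
    have := hb j
    simp; field_simp; ring
  have eB : ∀ k, B.eval (z k) = 0 := by
    intro k
    simp only [B, eval_prod]
    exact prod_eq_zero (mem_univ k) (by simp)
  have key := Lagrange.eq_interpolate_of_eval_eq (s := univ) (v := z)
    (r := fun k => ∏ j, (1 - b j * z k)) hz.injOn hd
    (fun k _ => by rw [eval_mul, eval_C, eval_sub, eB, sub_zero, ecA])
  have h0 := congrArg (eval 0) key
  rw [eval_mul, eval_C, eval_sub, mul_sub, ecA, Lagrange.interpolate_apply, eval_finsetSum] at h0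
  have h1 : c * B.eval 0 = ∏ j, b j * z j := by
    simp only [B, c, eval_prod, ← prod_mul_distrib]
    exact prod_congr rfl fun j _ => by simp
  rw [h1] at h0
  simp only [mul_zero, sub_zero, prod_const_one] at h0
  rw [h0]
  refine sum_congr rfl fun k _ => ?_
  rw [eval_mul, eval_C, Lagrange.basis, eval_prod]
  congr 1
  refine prod_congr rfl fun j hj => ?_
  have hne : z j - z k ≠ 0 := sub_ne_zero.2 fun h => (mem_erase.1 hj).1 (hz h)
  have hne' : z k - z j ≠ 0 := by rw [← neg_sub]; exact neg_ne_zero.2 hne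
  simp only [Lagrange.basisDivisor, eval_mul, eval_C, eval_sub, eval_X]
  field_simp; ring

/-- The Vandermonde product `∏_{i<j} (z j - z i)`. -/
noncomputable def vand {n : ℕ} (z : Fin n → ℂ) : ℂ := ∏ i, ∏ j ∈ Ioi i, (z j - z i)

lemma vand_swap {n : ℕ} (z : Fin n → ℂ) {i j : Fin n} (hij : i ≠ j) :
    vand (z ∘ Equiv.swap i j) = -vand z := by
  have h := Matrix.det_permute (Equiv.swap i j) (Matrix.vandermonde z)
  rw [Equiv.Perm.sign_swap hij] at h
  have h2 : (Matrix.vandermonde z).submatrix (Equiv.swap i j) id =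
      Matrix.vandermonde (z ∘ Equiv.swap i j) := by
    ext a b; simp [Matrix.vandermonde]
  rw [h2, Matrix.det_vandermonde, Matrix.det_vandermonde] at h
  simpa [vand] using h

/-- Isolating the factors that involve `z k`: the other factors form the product `R`,
and `ε` collects the signs. -/
lemma vand_split {n : ℕ} (k : Fin n) :
    ∃ (R : (Fin n → ℂ) → ℂ) (ε : ℂ), (∀ z w, R (Function.update z k w) = R z) ∧
      ∀ z, vand z = R z * (ε * ∏ j ∈ univ.erase k, (z j - z k)) := by
  classical
  refine ⟨fun z => ∏ i ∈ univ.erase k, ∏ j ∈ univ.erase k, if i < j then z j - z i else 1,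
    ∏ j ∈ univ.erase k, if k < j then 1 else -1, fun z w => ?_, fun z => ?_⟩
  · refine prod_congr rfl fun i hi => prod_congr rfl fun j hj => ?_
    rw [Function.update_of_ne (mem_erase.1 hi).1, Function.update_of_ne (mem_erase.1 hj).1]
  · have h0 : vand z = ∏ i, ∏ j, if i < j then z j - z i else 1 := by
      refine prod_congr rfl fun i _ => ?_
      rw [← prod_filter]
      congr 1
      ext j; simp
    have h1 : ∀ i, (∏ j, if i < j then z j - z i else 1) =
        (if i < k then z k - z i else 1) * ∏ j ∈ univ.erase k, if i < j then z j - z i else 1 :=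
      fun i => (mul_prod_erase univ (fun j => if i < j then z j - z i else 1) (mem_univ k)).symm
    rw [h0, ← mul_prod_erase univ _ (mem_univ k)]
    simp_rw [h1]
    rw [prod_mul_distrib, if_neg (lt_irrefl k), one_mul, ← mul_assoc, ← prod_mul_distrib,
      mul_comm, ← prod_mul_distrib, ← prod_mul_distrib, ← prod_mul_distrib]
    refine prod_congr rfl fun j hj => ?_
    congr 1
    rcases lt_or_gt_of_ne (mem_erase.1 hj).1 with h | h
    · simp [h, h.not_gt]
    · simp [h, h.not_gt]

lemma vand_update {n : ℕ} (z : Fin n → ℂ) (k : Fin n) (w : ℂ) :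
    vand (Function.update z k w) * ∏ j ∈ univ.erase k, (z j - z k) =
      vand z * ∏ j ∈ univ.erase k, (z j - w) := by
  obtain ⟨R, ε, hR, hV⟩ := vand_split k
  have h : ∏ j ∈ univ.erase k, (Function.update z k w j - Function.update z k w k) =
      ∏ j ∈ univ.erase k, (z j - w) :=
    prod_congr rfl fun j hj => by rw [Function.update_of_ne (mem_erase.1 hj).1]; simp
  rw [hV, hV z, hR, h]; ring

/-! ### Summability over the positive cone -/

lemma summable_prod_pi (n : ℕ) (s : ℤ → ℝ) (hs : Summable s) (h0 : 0 ≤ s) :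
    Summable fun ν : Fin n → ℤ => ∏ i, s (ν i) := by
  induction n with
  | zero => exact Summable.of_finite
  | succ n ih =>
    rw [← (Fin.consEquiv fun _ : Fin (n + 1) => ℤ).summable_iff]
    refine (hs.mul_of_nonneg ih h0 fun ν => prod_nonneg fun i _ => h0 _).congr fun p => ?_
    simp [Fin.consEquiv, Fin.prod_univ_succ]

/-- The geometric weight `r ^ m` on `m ≥ 0`, extended by zero to negative `m`. -/
noncomputable def geo (r : ℝ) (m : ℤ) : ℝ := if 0 ≤ m then r ^ m else 0

lemma geo_nonneg {r : ℝ} (hr : 0 ≤ r) : 0 ≤ geo r := fun m => by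
  unfold geo; split_ifs
  · exact zpow_nonneg hr _
  · exact le_rfl

lemma summable_geo {r : ℝ} (hr : 0 ≤ r) (hr1 : r < 1) : Summable (geo r) := by
  refine Summable.of_nat_of_neg_add_one ?_ ?_
  · simpa [geo] using summable_geometric_of_lt_one hr hr1
  · refine summable_zero.congr fun m => ?_
    rw [geo, if_neg (by omega)]

/-- `φ` is bounded on the positive cone `ν ≥ 0`. -/
def BddCone {n : ℕ} (φ : (Fin n → ℤ) → ℂ) : Prop := ∃ C, ∀ ν, 0 ≤ ν → ‖φ ν‖ ≤ C

lemma BddCone.mul {n : ℕ} {φ ψ : (Fin n → ℤ) → ℂ} (h1 : BddCone φ) (h2 : BddCone ψ) :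
    BddCone fun ν => φ ν * ψ ν := by
  obtain ⟨C, hC⟩ := h1
  obtain ⟨D, hD⟩ := h2
  refine ⟨C * D, fun ν hν => ?_⟩
  rw [norm_mul]
  exact mul_le_mul (hC ν hν) (hD ν hν) (norm_nonneg _) ((norm_nonneg _).trans (hC ν hν))

lemma BddCone.sub {n : ℕ} {φ ψ : (Fin n → ℤ) → ℂ} (h1 : BddCone φ) (h2 : BddCone ψ) :
    BddCone fun ν => φ ν - ψ ν := by
  obtain ⟨C, hC⟩ := h1
  obtain ⟨D, hD⟩ := h2
  exact ⟨C + D, fun ν hν => (norm_sub_le _ _).trans (add_le_add (hC ν hν) (hD ν hν))⟩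

lemma BddCone.prod {n : ℕ} {ι : Type*} {φ : ι → (Fin n → ℤ) → ℂ} (s : Finset ι)
    (h : ∀ i ∈ s, BddCone (φ i)) : BddCone fun ν => ∏ i ∈ s, φ i ν := by
  classical
  induction s using Finset.induction_on with
  | empty => exact ⟨1, fun ν _ => by simp⟩
  | insert i s his ih =>
    simp only [prod_insert his]
    exact (h i (mem_insert_self i s)).mul (ih fun j hj => h j (mem_insert_of_mem hj))

lemma bddCone_const {n : ℕ} (c : ℂ) : BddCone fun _ : Fin n → ℤ => c := ⟨‖c‖, fun _ _ => le_rfl⟩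

lemma bddCone_of_tendsto {n : ℕ} {f : ℤ → ℂ} {l : ℂ} (i : Fin n)
    (h : Tendsto (fun m : ℕ => f m) atTop (𝓝 l)) : BddCone fun ν : Fin n → ℤ => f (ν i) := by
  obtain ⟨C, hC⟩ := (Metric.isBounded_range_of_tendsto _ h).exists_norm_le
  refine ⟨C, fun ν hν => ?_⟩
  have := hC _ ⟨(ν i).toNat, rfl⟩
  simpa [Int.toNat_of_nonneg (hν i)] using this

lemma zpow_sum {n : ℕ} {t : ℂ} (ht : t ≠ 0) (ν : Fin n → ℤ) :
    t ^ (∑ i, ν i) = ∏ i, t ^ ν i := by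
  induction n with
  | zero => simp
  | succ n ih => rw [Fin.sum_univ_succ, Fin.prod_univ_succ, zpow_add₀ ht, ih fun i => ν i.succ]

lemma norm_le_geo {n : ℕ} {t : ℂ} (ht : t ≠ 0) {φ : (Fin n → ℤ) → ℂ} {C : ℝ}
    (hC : ∀ ν, 0 ≤ ν → ‖φ ν‖ ≤ C) (hs : ∀ ν, ¬ 0 ≤ ν → φ ν = 0) {r : ℝ} (htr : ‖t‖ ≤ r)
    (ν : Fin n → ℤ) : ‖t ^ (∑ i, ν i) * φ ν‖ ≤ (∏ i, geo r (ν i)) * C := by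
  have hr : 0 ≤ r := (norm_nonneg _).trans htr
  by_cases hν : 0 ≤ ν
  · rw [norm_mul, zpow_sum ht, norm_prod]
    refine mul_le_mul ?_ (hC ν hν) (norm_nonneg _) (prod_nonneg fun i _ => geo_nonneg hr _)
    refine prod_le_prod (fun i _ => norm_nonneg _) fun i _ => ?_
    rw [geo, if_pos (show 0 ≤ ν i from hν i), norm_zpow]
    exact zpow_le_zpow_left₀ (hν i) (norm_nonneg _) htr
  · obtain ⟨i, hi⟩ : ∃ i, ¬ 0 ≤ ν i := by simpa [Pi.le_def] using hν
    rw [hs ν hν, mul_zero, norm_zero, prod_eq_zero (mem_univ i) (by rw [geo, if_neg hi]), zero_mul]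

lemma summable_of_bddCone {n : ℕ} {t : ℂ} (ht : t ≠ 0) (ht1 : ‖t‖ < 1)
    {φ : (Fin n → ℤ) → ℂ} (hb : BddCone φ) (hs : ∀ ν, ¬ 0 ≤ ν → φ ν = 0) :
    Summable fun ν => t ^ (∑ i, ν i) * φ ν := by
  obtain ⟨C, hC⟩ := hb
  exact Summable.of_norm_bounded
    ((summable_prod_pi n _ (summable_geo (norm_nonneg t) ht1)
      (geo_nonneg (norm_nonneg t))).mul_right C)
    (norm_le_geo ht hC hs le_rfl)

/-! ### The summand and its shift relation -/

/-- The lattice point `a q^ν`. -/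
noncomputable def node {n : ℕ} (q : ℂ) (a : Fin n → ℂ) (ν : Fin n → ℤ) (i : Fin n) : ℂ :=
  a i * q ^ ν i

/-- The one-variable factor `∏_j (q z / a_j)_∞ / (b_j z)_∞` of the summand. -/
noncomputable def wt {n : ℕ} (q : ℂ) (a b : Fin n → ℂ) (z : ℂ) : ℂ :=
  ∏ j, qp q (q * (a j)⁻¹ * z) / qp q (b j * z)

/-- The summand of the Jackson integral `I(t;a)` without the power of `t`. -/
noncomputable def core {n : ℕ} (q : ℂ) (a b : Fin n → ℂ) (ν : Fin n → ℤ) : ℂ :=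
  (∏ i, wt q a b (node q a ν i)) * vand (node q a ν)

/-- The `k`-th partial fraction coefficient `∏_j (1 - c_j z_k) ∏_{j≠k} z_j / (z_j - z_k)`. -/
noncomputable def coef {n : ℕ} (c z : Fin n → ℂ) (k : Fin n) : ℂ :=
  (∏ j, (1 - c j * z k)) * ∏ j ∈ univ.erase k, z j / (z j - z k)

lemma mgTerm_eq {n : ℕ} (q t : ℂ) (a b : Fin n → ℂ) (ν : Fin n → ℤ) :
    mgTerm q t a b a ν = t ^ (∑ i, ν i) * core q a b ν := by
  rw [mgTerm, core, mul_assoc]; rfl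

variable {n : ℕ} {a b : Fin n → ℂ}

lemma wt_of_neg (hq0 : q ≠ 0) (ha : ∀ i, a i ≠ 0) (i : Fin n) {m : ℤ} (hm : m < 0) :
    wt q a b (a i * q ^ m) = 0 := by
  refine prod_eq_zero (mem_univ i) ?_
  have : q * (a i)⁻¹ * (a i * q ^ m) = q ^ (m + 1) := by
    rw [zpow_add₀ hq0, zpow_one]
    have := ha i
    field_simp
  rw [this, qp_zpow_eq_zero hq0 (by omega), zero_div]

lemma core_of_not_nonneg (hq0 : q ≠ 0) (ha : ∀ i, a i ≠ 0) (ν : Fin n → ℤ) (hν : ¬ 0 ≤ ν) :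
    core q a b ν = 0 := by
  obtain ⟨i, hi⟩ : ∃ i, ν i < 0 := by simpa [Pi.le_def] using hν
  rw [core, prod_eq_zero (mem_univ i) (wt_of_neg hq0 ha i hi), zero_mul]

/-- The first-order q-difference equation of the one-variable factor. At negative `m`, where
a denominator may vanish, both sides are zero. -/
lemma wt_shift (hq0 : q ≠ 0) (hq : ‖q‖ < 1) (ha : ∀ i, a i ≠ 0)
    (hab : ∀ i j, ∀ m : ℕ, a i * b j ≠ (q ^ m)⁻¹) (i : Fin n) (m : ℤ) :
    wt q a b (a i * q ^ (m + 1)) * ∏ j, (1 - (a j)⁻¹ * (a i * q ^ (m + 1))) =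
      wt q a b (a i * q ^ m) * ∏ j, (1 - b j * (a i * q ^ m)) := by
  rcases lt_trichotomy m (-1) with hm | hm | hm
  · rw [wt_of_neg hq0 ha i (by omega : m + 1 < 0), wt_of_neg hq0 ha i (by omega : m < 0)]
    simp
  · rw [wt_of_neg hq0 ha i (by omega : m < 0), zero_mul]
    rw [prod_eq_zero (mem_univ i), mul_zero]
    simp [hm, ha i]
  · obtain ⟨p, rfl⟩ := Int.eq_ofNat_of_zero_le (by omega : 0 ≤ m)
    rw [wt, wt, ← prod_mul_distrib, ← prod_mul_distrib]
    refine prod_congr rfl fun j _ => ?_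
    have h1 : 1 - b j * (a i * q ^ (p : ℤ)) ≠ 0 := by
      refine sub_ne_zero.2 fun h => hab i j p ?_
      rw [zpow_natCast] at h
      exact eq_inv_of_mul_eq_one_right (by rw [h]; ring)
    have e1 : q * (b j * (a i * q ^ (p : ℤ))) = b j * (a i * q ^ ((p : ℤ) + 1)) := by
      rw [zpow_add₀ hq0, zpow_one]; ring
    have e2 : q * (a j)⁻¹ * (a i * q ^ (p : ℤ)) = (a j)⁻¹ * (a i * q ^ ((p : ℤ) + 1)) := by
      rw [zpow_add₀ hq0, zpow_one]; ring
    rw [qp_eq_mul hq (b j * (a i * q ^ (p : ℤ))), e1, e2,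
      qp_eq_mul hq ((a j)⁻¹ * (a i * q ^ ((p : ℤ) + 1))), ← mul_assoc q]
    generalize qp q (b j * (a i * q ^ ((p : ℤ) + 1))) = X
    generalize qp q (q * (a j)⁻¹ * (a i * q ^ ((p : ℤ) + 1))) = Y
    rw [mul_comm, ← mul_div_assoc, div_mul_eq_mul_div, mul_comm (1 - b j * _) X,
      mul_div_mul_right _ _ h1]

lemma node_injective (hq0 : q ≠ 0) (hnd : ∀ i j, i ≠ j → ∀ m : ℤ, a i ≠ a j * q ^ m)
    (ν : Fin n → ℤ) : Function.Injective (node q a ν) := by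
  intro i j h
  by_contra hij
  refine hnd i j hij (ν j - ν i) ?_
  have h' : a i * q ^ ν i = a j * q ^ ν j := h
  rw [zpow_sub₀ hq0, ← mul_div_assoc, eq_div_iff (zpow_ne_zero _ hq0), h']

lemma node_add_single (ν : Fin n → ℤ) (k : Fin n) :
    node q a (ν + Pi.single k 1) =
      Function.update (node q a ν) k (a k * q ^ (ν k + 1)) := by
  ext i
  by_cases h : i = k
  · subst h; simp [node]
  · simp [node, h]

/-- Moving `ν` to `ν + e_k` trades the partial fraction coefficient with parameters `1 / a_j` for
the one with parameters `b_j`. This is the relation that makes the sum over `ν` collapse. -/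
lemma core_shift (hq0 : q ≠ 0) (hq : ‖q‖ < 1) (ha : ∀ i, a i ≠ 0)
    (hab : ∀ i j, ∀ m : ℕ, a i * b j ≠ (q ^ m)⁻¹)
    (hnd : ∀ i j, i ≠ j → ∀ m : ℤ, a i ≠ a j * q ^ m) (ν : Fin n → ℤ) (k : Fin n) :
    core q a b (ν + Pi.single k 1) *
        coef (fun j => (a j)⁻¹) (node q a (ν + Pi.single k 1)) k =
      core q a b ν * coef b (node q a ν) k := by
  have hinj := node_injective hq0 hnd ν
  have hinj' := node_injective hq0 hnd (ν + Pi.single k 1)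
  have hw := wt_shift hq0 hq ha hab k (ν k)
  rw [node_add_single] at hinj'
  simp only [core, coef]
  rw [node_add_single]
  set z := node q a ν with hz
  have hzk : a k * q ^ ν k = z k := rfl
  rw [hzk] at hw
  generalize a k * q ^ (ν k + 1) = w at *
  have hV := vand_update z k w
  have e0 : ∀ j ∈ univ.erase k, Function.update z k w j = z j := fun j hj =>
    Function.update_of_ne (mem_erase.1 hj).1 _ _
  have e1 : ∏ i, wt q a b (Function.update z k w i) =
      wt q a b w * ∏ i ∈ univ.erase k, wt q a b (z i) := by
    rw [← mul_prod_erase univ _ (mem_univ k), Function.update_self]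
    congr 1
    exact prod_congr rfl fun j hj => by rw [e0 j hj]
  have e2 : ∏ j ∈ univ.erase k, Function.update z k w j /
        (Function.update z k w j - Function.update z k w k) =
      (∏ j ∈ univ.erase k, z j) / ∏ j ∈ univ.erase k, (z j - w) := by
    rw [← prod_div_distrib]
    exact prod_congr rfl fun j hj => by rw [e0 j hj, Function.update_self]
  have hD : ∏ j ∈ univ.erase k, (z j - z k) ≠ 0 :=
    prod_ne_zero_iff.2 fun j hj => sub_ne_zero.2 fun h => (mem_erase.1 hj).1 (hinj h)
  have hD' : ∏ j ∈ univ.erase k, (z j - w) ≠ 0 :=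
    prod_ne_zero_iff.2 fun j hj => sub_ne_zero.2 fun h =>
      (mem_erase.1 hj).1 (hinj' (by rw [e0 j hj, Function.update_self, h]))
  rw [e1, e2, ← mul_prod_erase univ (fun i => wt q a b (z i)) (mem_univ k), prod_div_distrib,
    Function.update_self]
  have hV' : vand (Function.update z k w) / ∏ j ∈ univ.erase k, (z j - w) =
      vand z / ∏ j ∈ univ.erase k, (z j - z k) := by
    rw [div_eq_div_iff hD' hD, hV]
  calc _ = (wt q a b w * ∏ j, (1 - (a j)⁻¹ * w)) *
          ((∏ i ∈ univ.erase k, wt q a b (z i)) * (∏ j ∈ univ.erase k, z j)) *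
          (vand (Function.update z k w) / ∏ j ∈ univ.erase k, (z j - w)) := by ring
    _ = _ := by rw [hw, hV']; ring

lemma sum_coef (hq0 : q ≠ 0) (hnd : ∀ i j, i ≠ j → ∀ m : ℤ, a i ≠ a j * q ^ m)
    {c : Fin n → ℂ} (hc : ∀ i, c i ≠ 0) (ν : Fin n → ℤ) :
    ∑ k, coef c (node q a ν) k = 1 - (∏ i, a i) * (∏ i, c i) * q ^ (∑ i, ν i) := by
  have h := sum_partial_fractions c _ hc (node_injective hq0 hnd ν)
  rw [zpow_sum hq0, ← prod_mul_distrib, ← prod_mul_distrib]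
  simp only [coef]
  rw [h]
  congr 1
  exact prod_congr rfl fun i _ => by rw [node]; ring

/-! ### Boundedness of the summand -/

lemma qp_num_ne_zero (hq0 : q ≠ 0) (hq : ‖q‖ < 1) (ha : ∀ i, a i ≠ 0)
    (hnd : ∀ i j, i ≠ j → ∀ m : ℤ, a i ≠ a j * q ^ m) (i j : Fin n) :
    qp q (q * (a j)⁻¹ * a i) ≠ 0 := by
  by_cases hij : i = j
  · subst hij
    rw [mul_assoc, inv_mul_cancel₀ (ha i), mul_one]
    exact qp_self_ne_zero hq0 hq
  · refine qp_ne_zero hq fun p h => hnd i j hij (-(p + 1 : ℕ)) ?_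
    rw [zpow_neg, zpow_natCast, ← div_eq_mul_inv, eq_div_iff (pow_ne_zero _ hq0)]
    have := ha j
    field_simp at h
    rw [← h]; ring

lemma qp_den_ne_zero (hq : ‖q‖ < 1)
    (hab : ∀ i j, ∀ m : ℕ, a i * b j ≠ (q ^ m)⁻¹) (i j : Fin n) : qp q (a i * b j) ≠ 0 := by
  refine qp_ne_zero hq fun p h => hab i j p ?_
  exact eq_inv_of_mul_eq_one_right h

lemma tendsto_pow_zero (hq : ‖q‖ < 1) : Tendsto (fun m : ℕ => q ^ m) atTop (𝓝 0) :=
  tendsto_pow_atTop_nhds_zero_of_norm_lt_one hq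

lemma bddCone_node (hq : ‖q‖ < 1) (c : ℂ) (i : Fin n) :
    BddCone fun ν : Fin n → ℤ => c * node q a ν i := by
  refine bddCone_of_tendsto (f := fun m => c * (a i * q ^ m)) (l := c * (a i * 0)) i ?_
  simp only [zpow_natCast]
  exact ((tendsto_pow_zero hq).const_mul _).const_mul _

lemma bddCone_core (hq0 : q ≠ 0) (hq : ‖q‖ < 1) (ha : ∀ i, a i ≠ 0)
    (hab : ∀ i j, ∀ m : ℕ, a i * b j ≠ (q ^ m)⁻¹)
    (hnd : ∀ i j, i ≠ j → ∀ m : ℤ, a i ≠ a j * q ^ m) : BddCone (core q a b) := by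
  refine BddCone.mul (BddCone.prod _ fun i _ => BddCone.prod _ fun j _ => ?_)
    (BddCone.prod _ fun i _ => BddCone.prod _ fun j _ => ?_)
  · refine bddCone_of_tendsto
      (f := fun m => qp q (q * (a j)⁻¹ * (a i * q ^ m)) / qp q (b j * (a i * q ^ m)))
      (l := 1 / 1) i ?_
    refine ((tendsto_qp_pow hq (qp_num_ne_zero hq0 hq ha hnd i j)).div
      (tendsto_qp_pow hq (qp_den_ne_zero hq hab i j)) one_ne_zero).congr fun m => ?_
    rw [Pi.div_apply, zpow_natCast]
    congr 2 <;> ring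
  · simpa using (bddCone_node hq 1 j).sub (bddCone_node hq 1 i)

/-- The two-sided sequence `1 / (1 - x q^m)` is bounded: it tends to `1` as `m → ∞` and to `0`
as `m → -∞`. -/
lemma bdd_inv_one_sub (hq0 : q ≠ 0) (hq : ‖q‖ < 1) {x : ℂ} (hx0 : x ≠ 0) :
    ∃ C, ∀ m : ℤ, ‖(1 - x * q ^ m)⁻¹‖ ≤ C := by
  have h1 : Tendsto (fun m : ℕ => (1 - x * q ^ m)⁻¹) atTop (𝓝 (1 - x * 0)⁻¹) :=
    (((tendsto_pow_zero hq).const_mul x).const_sub 1).inv₀ (by simp)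
  have h2 : Tendsto (fun m : ℕ => q ^ m / (q ^ m - x)) atTop (𝓝 (0 / (0 - x))) :=
    (tendsto_pow_zero hq).div ((tendsto_pow_zero hq).sub_const x) (by simpa using hx0)
  obtain ⟨C, hC⟩ := (Metric.isBounded_range_of_tendsto _ h1).exists_norm_le
  obtain ⟨D, hD⟩ := (Metric.isBounded_range_of_tendsto _ h2).exists_norm_le
  refine ⟨max C D, fun m => ?_⟩
  rcases le_total 0 m with hm | hm
  · obtain ⟨p, rfl⟩ := Int.eq_ofNat_of_zero_le hm
    exact (hC _ ⟨p, by simp⟩).trans (le_max_left _ _)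
  · obtain ⟨p, rfl⟩ := Int.exists_eq_neg_ofNat hm
    refine (hD _ ⟨p, ?_⟩).trans (le_max_right _ _)
    have hp := pow_ne_zero p hq0
    have : 1 - x * q ^ (-(p : ℤ)) = (q ^ p - x) / q ^ p := by
      rw [zpow_neg, zpow_natCast]; field_simp
    rw [this, inv_div]

lemma bddCone_coef (hq0 : q ≠ 0) (hq : ‖q‖ < 1) (ha : ∀ i, a i ≠ 0) (c : Fin n → ℂ)
    (k : Fin n) : BddCone fun ν => coef c (node q a ν) k := by
  refine BddCone.mul (BddCone.prod _ fun j _ => (bddCone_const 1).sub (bddCone_node hq (c j) k))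
    (BddCone.prod _ fun j _ => ?_)
  obtain ⟨C, hC⟩ := bdd_inv_one_sub hq0 hq (div_ne_zero (ha k) (ha j))
  refine ⟨C, fun ν _ => ?_⟩
  convert hC (ν k - ν j) using 2
  have hzj : node q a ν j ≠ 0 := mul_ne_zero (ha j) (zpow_ne_zero _ hq0)
  have : 1 - a k / a j * q ^ (ν k - ν j) = (node q a ν j - node q a ν k) / node q a ν j := by
    rw [sub_div, div_self hzj, node, node, zpow_sub₀ hq0, div_mul_div_comm]
  rw [this, inv_div]

/-! ### The q-difference equation in `t` -/

/-- The sum `∑_ν t^|ν| core ν`, i.e. `I(t;a)` up to the factor `(1 - q)^n`. -/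
noncomputable def total (q : ℂ) (a b : Fin n → ℂ) (t : ℂ) : ℂ :=
  ∑' ν : Fin n → ℤ, t ^ (∑ i, ν i) * core q a b ν

/-- Expanding `1 - q^|ν|` in partial fraction coefficients, shifting the summation index in each
term and resumming gives the q-difference equation. -/
lemma total_qdiff (hq0 : q ≠ 0) (hq : ‖q‖ < 1) (ha : ∀ i, a i ≠ 0) (hb : ∀ i, b i ≠ 0)
    (hab : ∀ i j, ∀ m : ℕ, a i * b j ≠ (q ^ m)⁻¹)
    (hnd : ∀ i j, i ≠ j → ∀ m : ℤ, a i ≠ a j * q ^ m)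
    {t : ℂ} (ht0 : t ≠ 0) (ht : ‖t‖ < 1) :
    (1 - t) * total q a b t = (1 - t * (∏ i, a i) * ∏ i, b i) * total q a b (q * t) := by
  have hcore := bddCone_core hq0 hq ha hab hnd
  have hsupp := core_of_not_nonneg (b := b) hq0 ha
  have S1 : Summable fun ν => t ^ (∑ i, ν i) * core q a b ν :=
    summable_of_bddCone ht0 ht hcore hsupp
  have S2 : Summable fun ν => (q * t) ^ (∑ i, ν i) * core q a b ν := by
    refine summable_of_bddCone (mul_ne_zero hq0 ht0) ?_ hcore hsupp
    rw [norm_mul]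
    exact mul_lt_one_of_nonneg_of_lt_one_left (norm_nonneg _) hq ht.le
  have hA : (∏ i, a i) * ∏ i, (a i)⁻¹ = 1 := by
    rw [← prod_mul_distrib]
    exact prod_eq_one fun i _ => mul_inv_cancel₀ (ha i)
  let f : Fin n → (Fin n → ℤ) → ℂ := fun k ν =>
    t ^ (∑ i, ν i) * (core q a b ν * coef (fun j => (a j)⁻¹) (node q a ν) k)
  have Sf : ∀ k, Summable (f k) := fun k =>
    summable_of_bddCone ht0 ht (hcore.mul (bddCone_coef hq0 hq ha _ k))
      fun ν hν => by rw [hsupp ν hν, zero_mul]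
  let e : Fin n → (Fin n → ℤ) ≃ (Fin n → ℤ) := fun k => Equiv.addRight (Pi.single k 1)
  have hfe : ∀ k ν, f k (e k ν) =
      t * (t ^ (∑ i, ν i) * (core q a b ν * coef b (node q a ν) k)) := by
    intro k ν
    simp only [f, e, Equiv.coe_addRight]
    rw [core_shift hq0 hq ha hab hnd]
    have : ∑ i, (ν + Pi.single k 1 : Fin n → ℤ) i = ∑ i, ν i + 1 := by
      simp [sum_add_distrib]
    rw [this, zpow_add₀ ht0, zpow_one]; ring
  have L : total q a b t - total q a b (q * t) = ∑ k, ∑' ν, f k ν := by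
    rw [total, total, ← S1.tsum_sub S2, ← Summable.tsum_finsetSum fun k _ => Sf k]
    refine tsum_congr fun ν => ?_
    simp only [f]
    rw [← mul_sum, ← mul_sum, sum_coef hq0 hnd (fun i => inv_ne_zero (ha i)), hA, mul_zpow]
    ring
  have R : ∑ k, ∑' ν, f k ν =
      t * total q a b t - t * ((∏ i, a i) * ∏ i, b i) * total q a b (q * t) := by
    clear_value f e
    have h1 : ∀ k, ∑' ν, f k ν = ∑' ν, f k (e k ν) := fun k => ((e k).tsum_eq (f k)).symm
    simp_rw [h1]
    have Sfe : ∀ k, Summable fun ν => f k (e k ν) := fun k => ((e k).summable_iff (f := f k)).2 (Sf k)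
    rw [← Summable.tsum_finsetSum fun k _ => Sfe k, total, total,
      ← tsum_mul_left, ← tsum_mul_left, ← (S1.mul_left _).tsum_sub (S2.mul_left _)]
    refine tsum_congr fun ν => ?_
    simp only [hfe]
    rw [← mul_sum, ← mul_sum, ← mul_sum, sum_coef hq0 hnd hb, mul_zpow]
    ring
  linear_combination L + R

lemma total_iterate (hq0 : q ≠ 0) (hq : ‖q‖ < 1) (ha : ∀ i, a i ≠ 0) (hb : ∀ i, b i ≠ 0)
    (hab : ∀ i j, ∀ m : ℕ, a i * b j ≠ (q ^ m)⁻¹)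
    (hnd : ∀ i j, i ≠ j → ∀ m : ℤ, a i ≠ a j * q ^ m)
    {t : ℂ} (ht0 : t ≠ 0) (ht : ‖t‖ < 1) (m : ℕ) :
    (∏ k ∈ range m, (1 - q ^ k * t)) * total q a b t =
      (∏ k ∈ range m, (1 - q ^ k * (t * (∏ i, a i) * ∏ i, b i))) * total q a b (q ^ m * t) := by
  induction m with
  | zero => simp
  | succ m ih =>
    have h1 : ‖q ^ m * t‖ < 1 := by
      rw [norm_mul, norm_pow]
      exact mul_lt_one_of_nonneg_of_lt_one_right (pow_le_one₀ (norm_nonneg _) hq.le)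
        (norm_nonneg _) ht
    have h := total_qdiff hq0 hq ha hb hab hnd (mul_ne_zero (pow_ne_zero m hq0) ht0) h1
    rw [← mul_assoc q, ← pow_succ'] at h
    rw [prod_range_succ, prod_range_succ]
    linear_combination (1 - q ^ m * t) * ih +
      (∏ k ∈ range m, (1 - q ^ k * (t * (∏ i, a i) * ∏ i, b i))) * h

/-- Only the term `ν = 0` survives in the limit `t → 0`. -/
lemma tendsto_total (hq0 : q ≠ 0) (hq : ‖q‖ < 1) (ha : ∀ i, a i ≠ 0)
    (hab : ∀ i j, ∀ m : ℕ, a i * b j ≠ (q ^ m)⁻¹)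
    (hnd : ∀ i j, i ≠ j → ∀ m : ℤ, a i ≠ a j * q ^ m)
    {t : ℂ} (ht0 : t ≠ 0) (ht : ‖t‖ < 1) :
    Tendsto (fun m : ℕ => total q a b (q ^ m * t)) atTop (𝓝 (core q a b 0)) := by
  obtain ⟨C, hC⟩ := bddCone_core hq0 hq ha hab hnd
  have hsupp := core_of_not_nonneg (b := b) hq0 ha
  have hlim : ∑' ν : Fin n → ℤ, (if ν = 0 then core q a b 0 else 0) = core q a b 0 :=
    tsum_ite_eq _ _
  rw [← hlim]
  refine tendsto_tsum_of_dominated_convergence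
    ((summable_prod_pi n _ (summable_geo (norm_nonneg t) ht)
      (geo_nonneg (norm_nonneg t))).mul_right C) (fun ν => ?_) (.of_forall fun m ν => ?_)
  · by_cases hν : 0 ≤ ν
    · by_cases h0 : ν = 0
      · subst h0; simp
      · rw [if_neg h0]
        obtain ⟨p, hp⟩ := Int.eq_ofNat_of_zero_le (sum_nonneg fun i _ => hν i : 0 ≤ ∑ i, ν i)
        have hp0 : p ≠ 0 := by
          rintro rfl
          refine h0 (funext fun i => ?_)
          exact (sum_eq_zero_iff_of_nonneg fun i _ => hν i).1 (by simpa using hp) i (mem_univ i)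
        have h1 : Tendsto (fun m : ℕ => (q ^ m * t) ^ p * core q a b ν) atTop
            (𝓝 ((0 * t) ^ p * core q a b ν)) :=
          (((tendsto_pow_zero hq).mul_const t).pow p).mul_const _
        rw [zero_mul, zero_pow hp0, zero_mul] at h1
        simpa only [hp, Int.ofNat_eq_natCast, zpow_natCast] using h1
    · rw [hsupp ν hν, if_neg (by rintro rfl; exact hν le_rfl)]
      simp
  · refine norm_le_geo (mul_ne_zero (pow_ne_zero m hq0) ht0) hC hsupp ?_ ν
    rw [norm_mul, norm_pow]
    exact mul_le_of_le_one_left (norm_nonneg _) (pow_le_one₀ (norm_nonneg _) hq.le)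

lemma total_eval (hq0 : q ≠ 0) (hq : ‖q‖ < 1) (ha : ∀ i, a i ≠ 0) (hb : ∀ i, b i ≠ 0)
    (hab : ∀ i j, ∀ m : ℕ, a i * b j ≠ (q ^ m)⁻¹)
    (hnd : ∀ i j, i ≠ j → ∀ m : ℤ, a i ≠ a j * q ^ m)
    {t : ℂ} (ht0 : t ≠ 0) (ht : ‖t‖ < 1) :
    qp q t * total q a b t = qp q (t * (∏ i, a i) * ∏ i, b i) * core q a b 0 := by
  have h1 := (tendsto_prod_qp hq t).mul_const (total q a b t)
  have h2 := (tendsto_prod_qp hq (t * (∏ i, a i) * ∏ i, b i)).mul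
    (tendsto_total hq0 hq ha hab hnd ht0 ht)
  exact tendsto_nhds_unique h1
    (h2.congr fun m => (total_iterate hq0 hq ha hb hab hnd ht0 ht m).symm)

lemma core_zero (hq : ‖q‖ < 1) (ha : ∀ i, a i ≠ 0) :
    core q a b 0 = qp q q ^ n / (∏ i, ∏ j, qp q (a i * b j)) *
      ∏ i, ∏ j ∈ Ioi i, a j * th q (a i / a j) := by
  have hnum : ∏ i, ∏ j, qp q (q * (a j)⁻¹ * a i) =
      qp q q ^ n * ∏ i, ∏ j ∈ Ioi i, (qp q (q * (a j)⁻¹ * a i) * qp q (q * (a i)⁻¹ * a j)) := by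
    rw [prod_prod_Ioi_mul_eq_prod_prod_off_diag fun j i => qp q (q * (a j)⁻¹ * a i)]
    have : qp q q ^ n = ∏ i : Fin n, qp q (q * (a i)⁻¹ * a i) := by
      rw [prod_congr rfl fun i _ => by rw [mul_assoc, inv_mul_cancel₀ (ha i), mul_one]]
      simp
    rw [this, ← prod_mul_distrib]
    exact prod_congr rfl fun i _ => Fintype.prod_eq_mul_prod_compl i _
  have hth : ∏ i, ∏ j ∈ Ioi i, a j * th q (a i / a j) =
      (∏ i, ∏ j ∈ Ioi i, (qp q (q * (a j)⁻¹ * a i) * qp q (q * (a i)⁻¹ * a j))) * vand a := by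
    rw [vand, ← prod_mul_distrib]
    refine prod_congr rfl fun i _ => ?_
    rw [← prod_mul_distrib]
    refine prod_congr rfl fun j _ => ?_
    have hi := ha i
    have hj := ha j
    have e1 : q / (a i / a j) = q * (a i)⁻¹ * a j := by field_simp
    have e2 : q * (a i / a j) = q * (a j)⁻¹ * a i := by field_simp
    rw [th, qp_eq_mul hq (a i / a j), e1, e2]
    field_simp
  have hnode : node q a 0 = a := by ext i; simp [node]
  rw [core, hnode, hth]
  simp only [wt, prod_div_distrib]
  rw [hnum]
  simp only [mul_comm (b _)]
  ring

/-! ### Resonant parameters -/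

/-- If `a i = a j q^m` with `i ≠ j`, the affine involution of the lattice exchanging the `i`-th and
`j`-th coordinates of `a q^ν` reverses the sign of the summand. -/
lemma total_eq_zero (hq0 : q ≠ 0) {i j : Fin n} (hij : i ≠ j) {m : ℤ}
    (h : a i = a j * q ^ m) (t : ℂ) : total q a b t = 0 := by
  let s : Fin n → ℤ := Pi.single j m - Pi.single i m
  let e : (Fin n → ℤ) ≃ (Fin n → ℤ) :=
    (Equiv.arrowCongr (Equiv.swap i j) (Equiv.refl ℤ)).trans (Equiv.addRight s)
  have he : ∀ ν k, e ν k = ν (Equiv.swap i j k) + s k := fun ν k => by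
    simp [e]
  have hsum : ∀ ν, ∑ k, e ν k = ∑ k, ν k := fun ν => by
    simp only [he, sum_add_distrib]
    rw [Equiv.sum_comp (Equiv.swap i j) ν]
    simp [s]
  have hnode : ∀ ν, node q a (e ν) = node q a ν ∘ Equiv.swap i j := fun ν => by
    ext k
    simp only [node, he, Function.comp]
    by_cases hki : k = i
    · subst hki
      have : s k = -m := by simp [s, hij]
      rw [this, Equiv.swap_apply_left, h, zpow_add₀ hq0, zpow_neg]
      have := zpow_ne_zero m hq0
      field_simp
    · by_cases hkj : k = j
      · subst hkj
        have : s k = m := by simp [s, hij.symm]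
        rw [this, Equiv.swap_apply_right, h, zpow_add₀ hq0]; ring
      · have : s k = 0 := by simp [s, hki, hkj]
        rw [this, Equiv.swap_apply_of_ne_of_ne hki hkj, add_zero]
  have hneg : ∀ ν, t ^ (∑ k, e ν k) * core q a b (e ν) = -(t ^ (∑ k, ν k) * core q a b ν) := by
    intro ν
    rw [hsum, core, hnode, vand_swap _ hij, core]
    have := Equiv.prod_comp (Equiv.swap i j) fun k => wt q a b (node q a ν k)
    simp only [Function.comp] at this ⊢
    rw [this]; ring
  have h1 : total q a b t = -total q a b t := by
    conv_lhs => rw [total, ← e.tsum_eq]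
    simp_rw [hneg]
    rw [tsum_neg, total]
  exact self_eq_neg.1 h1

lemma prod_th_eq_zero (hq0 : q ≠ 0) (ha : ∀ i, a i ≠ 0) {i j : Fin n} (hij : i < j) {m : ℤ}
    (h : a i = a j * q ^ m) : ∏ i, ∏ j ∈ Ioi i, a j * th q (a i / a j) = 0 := by
  refine prod_eq_zero (mem_univ i) (prod_eq_zero (mem_Ioi.2 hij) ?_)
  rw [h, mul_div_cancel_left₀ _ (ha j), th_zpow hq0, mul_zero]

lemma eval_complex (hq0 : q ≠ 0) (hq : ‖q‖ < 1) (ha : ∀ i, a i ≠ 0) (hb : ∀ i, b i ≠ 0)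
    (hab : ∀ i j, ∀ m : ℕ, a i * b j ≠ (q ^ m)⁻¹) {t : ℂ} (ht0 : t ≠ 0) (ht : ‖t‖ < 1) :
    mgSum q t a b a =
      (1 - q) ^ n * qp q q ^ n * qp q (t * (∏ i, a i) * ∏ i, b i) /
          (qp q t * ∏ i, ∏ j, qp q (a i * b j)) *
        ∏ i, ∏ j ∈ Ioi i, a j * th q (a i / a j) := by
  have hmg : mgSum q t a b a = (1 - q) ^ n * total q a b t := by
    simp only [mgSum, mgTerm_eq, total]
  rw [hmg]
  by_cases hnd : ∀ i j, i ≠ j → ∀ m : ℤ, a i ≠ a j * q ^ m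
  · have hqt : qp q t ≠ 0 := by
      refine qp_ne_zero hq fun k h => ?_
      have h1 : ‖q ^ k * t‖ < 1 := by
        rw [norm_mul, norm_pow]
        exact mul_lt_one_of_nonneg_of_lt_one_right (pow_le_one₀ (norm_nonneg _) hq.le)
          (norm_nonneg _) ht
      rw [h, norm_one] at h1
      exact lt_irrefl _ h1
    have h := total_eval hq0 hq ha hb hab hnd ht0 ht
    rw [mul_comm, ← eq_div_iff hqt, core_zero hq ha] at h
    rw [h, div_eq_mul_inv, div_eq_mul_inv, div_eq_mul_inv, mul_inv]
    ring
  · push Not at hnd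
    obtain ⟨i, j, hij, m, h⟩ := hnd
    rw [total_eq_zero hq0 hij h]
    rcases lt_or_gt_of_ne hij with hlt | hlt
    · rw [prod_th_eq_zero hq0 ha hlt h, mul_zero, mul_zero]
    · have h' : a j = a i * q ^ (-m) := by
        rw [h, mul_assoc, ← zpow_add₀ hq0]; simp
      rw [prod_th_eq_zero hq0 ha hlt h', mul_zero, mul_zero]

end MilneGustafson

/-- Multi-dimensional q-binomial theorem: evaluation of the truncated
Milne–Gustafson sum `I(t;a)`. -/
theorem milne_gustafson_truncated_evaluation
    (q : ℝ) (hq0 : 0 < q) (hq1 : q < 1) (n : ℕ) (hn : 1 ≤ n)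
    (a b : Fin n → ℂ) (ha : ∀ i, a i ≠ 0) (hb : ∀ i, b i ≠ 0)
    (t : ℂ) (ht0 : t ≠ 0) (hupp : ‖t‖ < 1)
    (hab : ∀ i j, ∀ m : ℕ, a i * b j ≠ ((q : ℂ) ^ m)⁻¹) :
    mgSum (q : ℂ) t a b a =
      (1 - (q : ℂ)) ^ n * qp (q : ℂ) (q : ℂ) ^ n *
          qp (q : ℂ) (t * (∏ i, a i) * ∏ i, b i) /
          (qp (q : ℂ) t * ∏ i, ∏ j, qp (q : ℂ) (a i * b j)) *
        ∏ i, ∏ j ∈ Finset.Ioi i, a j * th (q : ℂ) (a i / a j) := by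
  refine MilneGustafson.eval_complex (by exact_mod_cast hq0.ne') ?_ ha hb hab ht0 hupp
  rw [Complex.norm_real, Real.norm_of_nonneg hq0.le]
  exact hq1
end
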